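/- Let 1 ≤ p < ∞, 0 < r < ∞, q = ∞ and set 1/s := (1/r − 1/p)₊. Let u, v, w ∈ 𝔐⁺ be weights with ∫₀ᵗ u < ∞ for all t > 0, and let k satisfy Oinarov's condition with constant D. Define (Tf)(x) := ess sup_{y≥x} w(y)∫₀ʸ k(y,z)f(z)dz, and for 0 < c < d ≤ ∞ the operators (H_{c,d}f)(x) := χ_{[c,d)}(x)∫_{σ^{-1}(c)}^x k(x,z)f(z)dz and (H_c f)(x) := χ_{[c,∞)}(x)∫₀ˣ k(x,z)f(z)dz. Then the least constant C_T such that ‖Tf‖_{L^r_u} ≤ C_T‖f‖_{L^p_v} for all f ∈ 𝔐⁺ is finite if and only if A₀ + A₁ + A₂ < ∞, where A₀ and A₁ are the least constants in (∫₀^∞ u(x)[ess sup_{y≥x} w(y)]^r(∫₀ˣ k(x,z)f(z)dz)^r dx)^{1/r} ≤ A₀‖f‖_{L^p_v} and (∫₀^∞ u(x)[ess sup_{y≥x} w(y)k(y,x)]^r(∫₀ˣ f)^r dx)^{1/r} ≤ A₁‖f‖_{L^p_v} over all f ∈ 𝔐⁺, and A₂ := sup_{t>0}(∫₀ᵗ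 u)^{1/r}‖H_t‖_{L^p_v→L^∞_w} if p ≤ r, while A₂ := (∫₀^∞ u(x)(∫₀ˣ u)^{s/p}‖H_{σ^{-1}(x),σ(x)}‖^s_{L^p_v→L^∞_w} dx)^{1/s} if r < p. Moreover C_T ≈ A₀ + A₁ + A₂, with equivalence constants depending only on p, r and D. -/

import Mathlib

open MeasureTheory Set ENNReal

noncomputable section

/-- `∫₀ᵃ f` (Lebesgue integral over `(0,a)`). -/
def intTo (a : ℝ) (f : ℝ → ℝ≥0∞) : ℝ≥0∞ := ∫⁻ t in Ioo (0:ℝ) a, f t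

/-- `∫ₐ^∞ f`. -/
def intFrom (a : ℝ) (f : ℝ → ℝ≥0∞) : ℝ≥0∞ := ∫⁻ t in Ioi a, f t

/-- `∫_c^d f`. -/
def intIoo (c d : ℝ) (f : ℝ → ℝ≥0∞) : ℝ≥0∞ := ∫⁻ t in Ioo c d, f t

/-- `∫_c^d f` with a possibly infinite upper endpoint `d`. -/
def intIooE (c : ℝ) (d : ℝ≥0∞) (f : ℝ → ℝ≥0∞) : ℝ≥0∞ :=
  ∫⁻ t in {z : ℝ | c < z ∧ ENNReal.ofReal z < d}, f t

/-- `∫_d^∞ f` with a possibly infinite lower endpoint `d`. -/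
def intFromE (d : ℝ≥0∞) (f : ℝ → ℝ≥0∞) : ℝ≥0∞ :=
  ∫⁻ t in {z : ℝ | d < ENNReal.ofReal z}, f t

/-- Weighted `L^p` quasinorm on `(0,∞)`, for `0 < p < ∞`. -/
def lpN (p : ℝ) (v f : ℝ → ℝ≥0∞) : ℝ≥0∞ :=
  (∫⁻ x in Ioi (0:ℝ), f x ^ p * v x) ^ (1/p)

/-- Weighted `L^∞` norm on `(0,∞)`. -/
def linfN (v f : ℝ → ℝ≥0∞) : ℝ≥0∞ :=
  essSup (fun x => v x * f x) (volume.restrict (Ioi (0:ℝ)))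

/-- Weighted `L^p` (quasi)norm with exponent `p ∈ (0,∞]`. -/
def lgenN (p : ℝ≥0∞) (v f : ℝ → ℝ≥0∞) : ℝ≥0∞ :=
  if p = ∞ then linfN v f else lpN p.toReal v f

/-- Least constant `C` such that `Φ f ≤ C * Ψ f` for every measurable `f`. -/
def leastC (Φ Ψ : (ℝ → ℝ≥0∞) → ℝ≥0∞) : ℝ≥0∞ :=
  sInf {C : ℝ≥0∞ | ∀ f : ℝ → ℝ≥0∞, Measurable f → Φ f ≤ C * Ψ f}

/-- Oinarov's condition with constant `D`. -/
def Oinarov (k : ℝ → ℝ → ℝ≥0∞) (D : ℝ≥0∞) : Prop :=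
  (∀ x y : ℝ, x < y → k x y = 0) ∧
    ∀ x z y : ℝ, 0 ≤ y → y ≤ z → z ≤ x →
      D⁻¹ * (k x z + k z y) ≤ k x y ∧ k x y ≤ D * (k x z + k z y)

/-- `σ(x) = inf {y > 0 : ∫₀ʸ u ≥ 2∫₀ˣ u}`, with `inf ∅ = ∞`. -/
def sigmaF (u : ℝ → ℝ≥0∞) (x : ℝ) : ℝ≥0∞ :=
  sInf (ENNReal.ofReal '' {y : ℝ | 0 < y ∧ 2 * intTo x u ≤ intTo y u})

/-- `σ⁻¹(x) = inf {y > 0 : ∫₀ʸ u ≥ ½∫₀ˣ u}`. -/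
def sigmaInv (u : ℝ → ℝ≥0∞) (x : ℝ) : ℝ :=
  sInf {y : ℝ | 0 < y ∧ intTo x u / 2 ≤ intTo y u}

/-- The extension of `σ` to a possibly infinite argument. -/
def sigmaE (u : ℝ → ℝ≥0∞) (d : ℝ≥0∞) : ℝ≥0∞ :=
  if d = ∞ then ∞ else sigmaF u d.toReal

/-- `σ² = σ ∘ σ`. -/
def sigma2 (u : ℝ → ℝ≥0∞) (x : ℝ) : ℝ≥0∞ := sigmaE u (sigmaF u x)

/-- `σ³ = σ ∘ σ ∘ σ`. -/
def sigma3 (u : ℝ → ℝ≥0∞) (x : ℝ) : ℝ≥0∞ := sigmaE u (sigma2 u x)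

/-- `ζ(x) = sup {y > 0 : ∫_y^∞ u ≥ ½∫ₓ^∞ u}`, with `sup ∅ = 0`. -/
def zt (u : ℝ → ℝ≥0∞) (x : ℝ) : ℝ :=
  sSup {y : ℝ | 0 < y ∧ intFrom x u / 2 ≤ intFrom y u}

/-- `ζ⁻¹(x) = sup {y > 0 : ∫_y^∞ u ≥ 2∫ₓ^∞ u}`, with `sup ∅ = 0`. -/
def ztInv (u : ℝ → ℝ≥0∞) (x : ℝ) : ℝ :=
  sSup {y : ℝ | 0 < y ∧ 2 * intFrom x u ≤ intFrom y u}

/-- The operator `T` in the case `q = ∞`: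
`(Tf)(x) = ess sup_{y ≥ x} w(y) ∫₀ʸ k(y,z) f(z) dz`. -/
def opTinf (w : ℝ → ℝ≥0∞) (k : ℝ → ℝ → ℝ≥0∞) (f : ℝ → ℝ≥0∞) (x : ℝ) : ℝ≥0∞ :=
  essSup (fun y => w y * intTo y (fun z => k y z * f z)) (volume.restrict (Ici x))

def CT (p r : ℝ) (u v w : ℝ → ℝ≥0∞) (k : ℝ → ℝ → ℝ≥0∞) : ℝ≥0∞ :=
  leastC (fun f => lpN r u (opTinf w k f)) (lpN p v)

def A0 (p r : ℝ) (u v w : ℝ → ℝ≥0∞) (k : ℝ → ℝ → ℝ≥0∞) : ℝ≥0∞ :=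
  leastC (fun f => (∫⁻ x in Ioi (0:ℝ),
      u x * (essSup w (volume.restrict (Ici x))) ^ r *
        (intTo x (fun z => k x z * f z)) ^ r) ^ (1/r)) (lpN p v)

def A1 (p r : ℝ) (u v w : ℝ → ℝ≥0∞) (k : ℝ → ℝ → ℝ≥0∞) : ℝ≥0∞ :=
  leastC (fun f => (∫⁻ x in Ioi (0:ℝ),
      u x * (essSup (fun y => w y * k y x) (volume.restrict (Ici x))) ^ r *
        (intTo x f) ^ r) ^ (1/r)) (lpN p v)

/-- `(H_t f)(x) = χ_{[t,∞)}(x) ∫₀ˣ k(x,z) f(z) dz`. -/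
def Ht (k : ℝ → ℝ → ℝ≥0∞) (t : ℝ) (f : ℝ → ℝ≥0∞) (x : ℝ) : ℝ≥0∞ :=
  if t ≤ x then intTo x (fun z => k x z * f z) else 0

/-- `(H_{c,d} f)(x) = χ_{[c,d)}(x) ∫_{σ⁻¹(c)}^x k(x,z) f(z) dz`. -/
def Hcd (u : ℝ → ℝ≥0∞) (k : ℝ → ℝ → ℝ≥0∞) (c : ℝ) (d : ℝ≥0∞)
    (f : ℝ → ℝ≥0∞) (x : ℝ) : ℝ≥0∞ :=
  if c ≤ x ∧ ENNReal.ofReal x < d then intIoo (sigmaInv u c) x (fun z => k x z * f z) else 0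

def A2 (p r : ℝ) (u v w : ℝ → ℝ≥0∞) (k : ℝ → ℝ → ℝ≥0∞) : ℝ≥0∞ :=
  if p ≤ r then
    ⨆ (t : ℝ) (_ : 0 < t), (intTo t u) ^ (1/r) *
      leastC (fun f => linfN w (Ht k t f)) (lpN p v)
  else
    (∫⁻ x in Ioi (0:ℝ), u x * (intTo x u) ^ ((1/r - 1/p)⁻¹ / p) *
        leastC (fun f => linfN w (Hcd u k (sigmaInv u x) (sigmaF u x) f)) (lpN p v)
          ^ (1/r - 1/p)⁻¹) ^ (1/r - 1/p)

lemma leastC_le {Φ Ψ : (ℝ → ℝ≥0∞) → ℝ≥0∞} {C : ℝ≥0∞}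
    (h : ∀ f, Measurable f → Ψ f ≠ ∞ → Φ f ≤ C * Ψ f) : leastC Φ Ψ ≤ C := by
  refine le_of_forall_gt fun C' hC' => ?_
  obtain ⟨c, hc1, hc2⟩ := exists_between hC'
  refine lt_of_le_of_lt (sInf_le ?_) hc2
  intro f hf
  by_cases hΨ : Ψ f = ∞
  · rw [hΨ, ENNReal.mul_top (ne_bot_of_gt hc1)]; exact le_top
  · exact (h f hf hΨ).trans (by gcongr)

lemma le_leastC {Φ Ψ : (ℝ → ℝ≥0∞) → ℝ≥0∞} (hC : leastC Φ Ψ ≠ ∞)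
    {f : ℝ → ℝ≥0∞} (hf : Measurable f) (hΨ : Ψ f ≠ ∞) : Φ f ≤ leastC Φ Ψ * Ψ f := by
  by_cases h0 : Ψ f = 0
  · have : ∃ C, C ∈ {C : ℝ≥0∞ | ∀ f : ℝ → ℝ≥0∞, Measurable f → Φ f ≤ C * Ψ f} := by
      by_contra hne
      push Not at hne
      apply hC
      rw [leastC, eq_empty_of_forall_notMem hne, sInf_empty]
    obtain ⟨C, hC⟩ := this
    have := hC f hf
    rw [h0, mul_zero] at this ⊢
    exact this
  · rw [← ENNReal.div_le_iff h0 hΨ]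
    refine le_sInf fun C hC => ?_
    rw [ENNReal.div_le_iff h0 hΨ]
    exact hC f hf

lemma leastC_mono {Φ Φ' Ψ : (ℝ → ℝ≥0∞) → ℝ≥0∞} (h : ∀ f, Φ f ≤ Φ' f) :
    leastC Φ Ψ ≤ leastC Φ' Ψ :=
  sInf_le_sInf fun _ hC f hf => (h f).trans (hC f hf)

lemma U_mono (u : ℝ → ℝ≥0∞) : Monotone (fun x => intTo x u) := fun _ _ h =>
  lintegral_mono_set (Ioo_subset_Ioo_right h)

lemma U_cont {u : ℝ → ℝ≥0∞} (hu : Measurable u)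
    (hfin : ∀ t : ℝ, 0 < t → intTo t u ≠ ∞) : Continuous (fun x => intTo x u) := by
  have hfin' : ∀ t : ℝ, intTo t u ≠ ∞ := fun t =>
    ne_top_of_le_ne_top (hfin (max t 1) (by positivity)) (U_mono u (le_max_left t 1))
  set g : ℝ → ℝ := fun x => (indicator (Ioi 0) u x).toReal with hg
  have hgm : Measurable g := (hu.indicator measurableSet_Ioi).ennreal_toReal
  have key : ∀ t : ℝ, ∫⁻ x in Iio t, indicator (Ioi 0) u x = intTo t u := by
    intro t
    rw [lintegral_indicator measurableSet_Ioi, Measure.restrict_restrict measurableSet_Ioi]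
    rfl
  have hi : ∀ t : ℝ, IntegrableOn g (Iio t) := by
    intro t
    apply integrable_toReal_of_lintegral_ne_top
    · exact (hu.indicator measurableSet_Ioi).aemeasurable
    · rw [key]; exact hfin' t
  have hII : ∀ a b : ℝ, IntervalIntegrable g volume a b := by
    intro a b
    rw [intervalIntegrable_iff]
    refine (hi (max a b + 1)).mono_set ?_
    intro x hx
    rcases hx with ⟨_, h⟩
    exact lt_of_le_of_lt h (by simp)
  have hc := intervalIntegral.continuous_primitive hII 0
  have heq : (fun x => intTo x u) = fun x => ENNReal.ofReal (∫ t in (0:ℝ)..x, g t) := by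
    funext x
    rcases le_total x 0 with hx | hx
    · have h1 : intTo x u = 0 := by simp [intTo, Ioo_eq_empty (not_lt.2 hx)]
      rw [h1, eq_comm, ENNReal.ofReal_eq_zero, intervalIntegral.integral_of_ge hx]
      have := integral_nonneg (μ := volume.restrict (Ioc x 0)) (f := g) (fun _ => ENNReal.toReal_nonneg)
      linarith
    · rw [intervalIntegral.integral_of_le hx, integral_Ioc_eq_integral_Ioo,
        integral_toReal, ENNReal.ofReal_toReal]
      · rw [intTo]
        refine setLIntegral_congr_fun measurableSet_Ioo fun z hz => ?_
        simp [indicator, hz.1]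
      · have : ∫⁻ a in Ioo 0 x, (Ioi 0).indicator u a = intTo x u := by
          rw [intTo]
          refine setLIntegral_congr_fun measurableSet_Ioo fun z hz => ?_
          simp [indicator, hz.1]
        rw [this]; exact hfin' x
      · exact (hu.indicator measurableSet_Ioi).aemeasurable
      · have : ∀ᵐ a ∂volume.restrict (Iio x), (Ioi 0).indicator u a < ∞ :=
          ae_lt_top (hu.indicator measurableSet_Ioi) (by rw [key]; exact hfin' x)
        exact ae_restrict_of_ae_restrict_of_subset (fun z hz => hz.2) this
  rw [heq]
  exact ENNReal.continuous_ofReal.comp hc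

/-- total mass -/
def Stot (u : ℝ → ℝ≥0∞) : ℝ≥0∞ := ∫⁻ t in Ioi (0:ℝ), u t

lemma U_le_S (u : ℝ → ℝ≥0∞) (x : ℝ) : intTo x u ≤ Stot u :=
  lintegral_mono_set Ioo_subset_Ioi_self

lemma U_zero (u : ℝ → ℝ≥0∞) {x : ℝ} (hx : x ≤ 0) : intTo x u = 0 := by
  simp [intTo, Ioo_eq_empty (not_lt.2 hx)]

lemma U_lt {u : ℝ → ℝ≥0∞} {x y : ℝ} (h : intTo x u < intTo y u) : x < y := by
  by_contra hc
  exact absurd (U_mono u (not_lt.1 hc)) (not_le.2 h)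

lemma exists_U_gt {u : ℝ → ℝ≥0∞} {a : ℝ≥0∞} (h : a < Stot u) : ∃ t : ℝ, a < intTo t u := by
  have : Stot u = ⨆ n : ℕ, intTo n u := by
    rw [Stot]
    have hU : Ioi (0:ℝ) = ⋃ n : ℕ, Ioo (0:ℝ) n := by
      ext x
      simp only [mem_Ioi, mem_iUnion, mem_Ioo, exists_and_left]
      exact ⟨fun h => ⟨h, exists_nat_gt x⟩, fun h => h.1⟩
    rw [hU, setLIntegral_iUnion_of_directed]
    · rfl
    · exact Monotone.directed_le fun m n hmn => Ioo_subset_Ioo_right (by exact_mod_cast hmn)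
  rw [this] at h
  obtain ⟨n, hn⟩ := lt_iSup_iff.1 h
  exact ⟨n, hn⟩

lemma exists_U_eq {u : ℝ → ℝ≥0∞} (hu : Measurable u)
    (hfin : ∀ t : ℝ, 0 < t → intTo t u ≠ ∞) {a : ℝ≥0∞} (h0 : 0 < a) (h : a < Stot u) :
    ∃ t : ℝ, 0 < t ∧ intTo t u = a := by
  obtain ⟨T, hT⟩ := exists_U_gt h
  have hT0 : 0 < T := by
    by_contra hc
    rw [U_zero u (not_lt.1 hc)] at hT
    exact not_lt_bot hT
  have := intermediate_value_Icc hT0.le (U_cont hu hfin).continuousOn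
  obtain ⟨t, ht, hta⟩ := this (show a ∈ Icc _ _ from ⟨by simp [U_zero], hT.le⟩)
  refine ⟨t, ?_, hta⟩
  by_contra hc
  simp only [U_zero u (not_lt.1 hc)] at hta
  exact h0.ne hta

/-- the measure of the sublevel sets -/
lemma mass_le {u : ℝ → ℝ≥0∞} (hu : Measurable u)
    (hfin : ∀ t : ℝ, 0 < t → intTo t u ≠ ∞) {a : ℝ≥0∞} (h : a ≤ Stot u) :
    ∫⁻ x in {y : ℝ | 0 < y ∧ intTo y u ≤ a}, u x = a := by
  rcases h.eq_or_lt with h | h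
  · have : {y : ℝ | 0 < y ∧ intTo y u ≤ a} = Ioi 0 := by
      ext y; simp only [mem_ofPred_eq, mem_Ioi, and_iff_left_iff_imp]
      intro _; rw [h]; exact U_le_S u y
    rw [this, h]; rfl
  · apply le_antisymm
    · refine le_of_forall_gt fun b hb => ?_
      obtain ⟨a', h1, h2⟩ := exists_between (lt_min hb h)
      obtain ⟨t, ht, hta⟩ := exists_U_eq hu hfin (bot_lt_of_lt h1) (h2.trans_le (min_le_right _ _))
      refine lt_of_le_of_lt ?_ (h2.trans_le (min_le_left _ _))
      rw [← hta]
      refine lintegral_mono_set fun y hy => ⟨hy.1, U_lt (u := u) (hy.2.trans_lt ?_)⟩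
      rwa [hta]
    · rcases eq_or_ne a 0 with h0 | h0
      · simp [h0]
      obtain ⟨t, ht, hta⟩ := exists_U_eq hu hfin (pos_iff_ne_zero.2 h0) h
      conv_lhs => rw [← hta]
      refine lintegral_mono_set fun y hy => ⟨hy.1, ?_⟩
      rw [← hta]; exact U_mono u hy.2.le

lemma sInv_spec {u : ℝ → ℝ≥0∞} (hu : Measurable u)
    (hfin : ∀ t : ℝ, 0 < t → intTo t u ≠ ∞) {x : ℝ} (hU : 0 < intTo x u) :
    0 < sigmaInv u x ∧ intTo (sigmaInv u x) u = intTo x u / 2 := by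
  have hx : 0 < x := by
    by_contra hc
    rw [U_zero u (not_lt.1 hc)] at hU; exact lt_irrefl _ hU
  have hlt : intTo x u / 2 < intTo x u := ENNReal.half_lt_self hU.ne' (hfin x hx)
  have hb : BddBelow {y : ℝ | 0 < y ∧ intTo x u / 2 ≤ intTo y u} := ⟨0, fun y hy => hy.1.le⟩
  obtain ⟨t, ht, hta⟩ := exists_U_eq hu hfin (ENNReal.half_pos hU.ne')
    (hlt.trans_le (U_le_S u x))
  have h1 : sigmaInv u x ≤ t := csInf_le hb ⟨ht, hta.ge⟩
  have h2 : intTo (sigmaInv u x) u ≤ intTo x u / 2 := by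
    rw [← hta]; exact U_mono u h1
  have h3 : intTo x u / 2 ≤ intTo (sigmaInv u x) u := by
    have hcl : IsClosed {y : ℝ | intTo x u / 2 ≤ intTo y u} :=
      isClosed_le continuous_const (U_cont hu hfin)
    have hm := csInf_mem_closure (s := {y : ℝ | 0 < y ∧ intTo x u / 2 ≤ intTo y u})
      ⟨t, ht, hta.ge⟩ hb
    exact closure_minimal (fun y hy => hy.2) hcl hm
  refine ⟨?_, le_antisymm h2 h3⟩
  by_contra hc
  rw [U_zero u (not_lt.1 hc)] at h3
  exact (ENNReal.half_pos hU.ne').not_ge h3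

lemma lt_sigma {u : ℝ → ℝ≥0∞} (hu : Measurable u)
    (hfin : ∀ t : ℝ, 0 < t → intTo t u ≠ ∞) {x y : ℝ} (h : intTo y u < 2 * intTo x u) :
    ENNReal.ofReal y < sigmaF u x := by
  have hop : IsOpen {z : ℝ | intTo z u < 2 * intTo x u} :=
    isOpen_lt (U_cont hu hfin) continuous_const
  have h' : ∃ z, max y 0 < z ∧ intTo z u < 2 * intTo x u := by
    have hy : max y 0 ∈ {z : ℝ | intTo z u < 2 * intTo x u} := by
      rcases le_total y 0 with h0 | h0
      · rw [max_eq_right h0]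
        change intTo 0 u < _
        rw [U_zero u le_rfl, ← U_zero u h0]; exact h
      · rw [max_eq_left h0]; exact h
    obtain ⟨ε, hε, hb⟩ := Metric.isOpen_iff.1 hop _ hy
    refine ⟨max y 0 + ε / 2, by linarith, hb ?_⟩
    rw [Metric.mem_ball, Real.dist_eq]
    rw [add_sub_cancel_left, abs_of_pos] <;> linarith
  obtain ⟨z, hz, hzU⟩ := h'
  have hz0 : 0 < z := (le_max_right _ _).trans_lt hz
  have : ENNReal.ofReal y < ENNReal.ofReal z :=
    (ENNReal.ofReal_lt_ofReal_iff hz0).2 ((le_max_left _ _).trans_lt hz)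
  refine this.trans_le (le_sInf ?_)
  rintro _ ⟨y', ⟨hy', hU'⟩, rfl⟩
  exact ENNReal.ofReal_le_ofReal (U_lt (hzU.trans_le hU')).le

/-- dyadic levels -/
def lv (lam : ℝ≥0∞) (j : ℤ) : ℝ≥0∞ := lam * 2 ^ j

lemma lv_succ (lam : ℝ≥0∞) (j : ℤ) : lv lam (j + 1) = 2 * lv lam j := by
  rw [lv, lv, ENNReal.zpow_add (by simp) (by simp), zpow_one]; ring

lemma lv_sub_one (lam : ℝ≥0∞) (j : ℤ) : 2 * lv lam (j - 1) = lv lam j := by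
  rw [← lv_succ, sub_add_cancel]

lemma lv_sub_nat (lam : ℝ≥0∞) (j : ℤ) (n : ℕ) : lv lam (j - n) = lv lam j * 2⁻¹ ^ n := by
  rw [lv, lv, sub_eq_add_neg, ENNReal.zpow_add (by simp) (by simp), ENNReal.zpow_neg, zpow_natCast,
    ENNReal.inv_pow, mul_assoc]

lemma lv_pos {lam : ℝ≥0∞} (h : lam ≠ 0) (j : ℤ) : 0 < lv lam j :=
  ENNReal.mul_pos h (ENNReal.zpow_pos (by simp) (by simp) j).ne'

lemma lv_ne_top {lam : ℝ≥0∞} (h : lam ≠ ∞) (j : ℤ) : lv lam j ≠ ∞ :=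
  ENNReal.mul_ne_top h (ENNReal.zpow_ne_top (by simp) (by simp) j)

lemma lv_mono (lam : ℝ≥0∞) : Monotone (lv lam) := fun i j h => by
  unfold lv
  gcongr
  · norm_num

lemma exists_lv {lam a : ℝ≥0∞} (h0 : lam ≠ 0) (ht : lam ≠ ∞) (ha : a ≠ 0) (hat : a ≠ ∞) :
    ∃ j, lv lam j < a ∧ a ≤ lv lam (j + 1) := by
  obtain ⟨n, h1, h2⟩ := ENNReal.exists_mem_Ioc_zpow (x := a / lam) (y := 2)
    (ENNReal.div_ne_zero.2 ⟨ha, ht⟩) (ENNReal.div_ne_top hat h0) (by norm_num) (by simp)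
  refine ⟨n, ?_, ?_⟩
  · rw [lv, mul_comm]; exact (ENNReal.lt_div_iff_mul_lt (Or.inl h0) (Or.inl ht)).1 h1
  · rw [lv, mul_comm]; exact (ENNReal.div_le_iff h0 ht).1 h2

lemma exists_lam {S : ℝ≥0∞} (hS : S ≠ 0) :
    ∃ lam : ℝ≥0∞, lam ≠ 0 ∧ lam ≠ ∞ ∧ ∀ j, lv lam j < S → lv lam (j + 1) ≤ S := by
  by_cases h : S = ∞
  · exact ⟨1, by simp, by simp, fun j _ => by simp [h]⟩
  · refine ⟨S, hS, h, fun j hj => ?_⟩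
    have : j + 1 ≤ 0 := by
      by_contra hc
      have h0 : 0 ≤ j := by omega
      have := lv_mono S h0
      simp only [lv, zpow_zero, mul_one] at this hj
      exact absurd hj (not_lt.2 this)
    have := lv_mono S this
    simpa [lv] using this

/-- dyadic level sets of the primitive of `u` -/
def El (u : ℝ → ℝ≥0∞) (lam : ℝ≥0∞) (j : ℤ) : Set ℝ :=
  {y | 0 < y ∧ lv lam j < intTo y u ∧ intTo y u ≤ lv lam (j + 1)}

lemma El_meas {u : ℝ → ℝ≥0∞} (lam : ℝ≥0∞) (j : ℤ) : MeasurableSet (El u lam j) := by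
  have := (U_mono u).measurable
  exact measurableSet_Ioi.inter
    ((measurableSet_lt measurable_const this).inter (measurableSet_le this measurable_const))

lemma El_le {u : ℝ → ℝ≥0∞} {lam : ℝ≥0∞} {i j : ℤ} {x y : ℝ} (hx : x ∈ El u lam i)
    (hy : y ∈ El u lam j) (hxy : x ≤ y) : i ≤ j := by
  by_contra hc
  have h1 : lv lam (j + 1) ≤ lv lam i := lv_mono lam (by omega)
  exact absurd (U_mono u hxy) (not_le.2 ((hy.2.2.trans h1).trans_lt hx.2.1))

lemma El_disj (u : ℝ → ℝ≥0∞) (lam : ℝ≥0∞) :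
    Pairwise (Function.onFun Disjoint (El u lam)) := by
  intro i j hij
  rw [Function.onFun, Set.disjoint_left]
  intro x hx hy
  exact hij (le_antisymm (El_le hx hy le_rfl) (El_le hy hx le_rfl))

lemma El_lt_S {u : ℝ → ℝ≥0∞} {lam : ℝ≥0∞} {j : ℤ} {x : ℝ} (hx : x ∈ El u lam j) :
    lv lam j < Stot u := hx.2.1.trans_le (U_le_S u x)

lemma El_mass {u : ℝ → ℝ≥0∞} (hu : Measurable u)
    (hfin : ∀ t : ℝ, 0 < t → intTo t u ≠ ∞) {lam : ℝ≥0∞} (ht : lam ≠ ∞) {j : ℤ}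
    (h : lv lam (j + 1) ≤ Stot u) : ∫⁻ x in El u lam j, u x = lv lam j := by
  have hle : lv lam j ≤ lv lam (j + 1) := lv_mono lam (by omega)
  have h1 := mass_le hu hfin h
  have h2 := mass_le hu hfin (hle.trans h)
  have hset : {y : ℝ | 0 < y ∧ intTo y u ≤ lv lam (j + 1)} =
      {y : ℝ | 0 < y ∧ intTo y u ≤ lv lam j} ∪ El u lam j := by
    ext y
    constructor
    · rintro ⟨ha, hb⟩
      by_cases hc : intTo y u ≤ lv lam j
      · exact Or.inl ⟨ha, hc⟩
      · exact Or.inr ⟨ha, not_le.1 hc, hb⟩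
    · rintro (⟨ha, hb⟩ | ⟨ha, hb, hc⟩)
      · exact ⟨ha, hb.trans hle⟩
      · exact ⟨ha, hc⟩
  have hd : Disjoint {y : ℝ | 0 < y ∧ intTo y u ≤ lv lam j} (El u lam j) := by
    rw [Set.disjoint_left]
    rintro y ⟨_, hy⟩ ⟨_, hy', _⟩
    exact absurd hy (not_le.2 hy')
  rw [hset, lintegral_union (El_meas lam j) hd, h2, lv_succ, two_mul] at h1
  exact (ENNReal.add_right_inj (lv_ne_top ht j)).1 h1

lemma El_mass_le {u : ℝ → ℝ≥0∞} (hu : Measurable u)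
    (hfin : ∀ t : ℝ, 0 < t → intTo t u ≠ ∞) {lam : ℝ≥0∞} (ht : lam ≠ ∞)
    (hl : ∀ j, lv lam j < Stot u → lv lam (j + 1) ≤ Stot u) (j : ℤ) :
    ∫⁻ x in El u lam j, u x ≤ lv lam j := by
  by_cases h : lv lam j < Stot u
  · exact (El_mass hu hfin ht (hl j h)).le
  · have : El u lam j = ∅ := eq_empty_of_forall_notMem fun x hx => h (El_lt_S hx)
    simp [this]

/-- The integral against `u` splits over the level sets. -/
lemma lint_split {u : ℝ → ℝ≥0∞} (hu : Measurable u)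
    (hfin : ∀ t : ℝ, 0 < t → intTo t u ≠ ∞) {lam : ℝ≥0∞} (h0 : lam ≠ 0) (ht : lam ≠ ∞)
    (G : ℝ → ℝ≥0∞) :
    ∫⁻ x in Ioi (0:ℝ), u x * G x = ∑' j, ∫⁻ x in El u lam j, u x * G x := by
  rw [← lintegral_iUnion (El_meas lam) (El_disj u lam)]
  have hset : Ioi (0:ℝ) = {y : ℝ | 0 < y ∧ intTo y u ≤ 0} ∪ ⋃ j, El u lam j := by
    ext y
    constructor
    · intro hy
      by_cases hc : intTo y u ≤ 0
      · exact Or.inl ⟨hy, hc⟩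
      · obtain ⟨j, h1, h2⟩ := exists_lv h0 ht (fun h => hc h.le) (hfin y hy)
        exact Or.inr (mem_iUnion.2 ⟨j, hy, h1, h2⟩)
    · rintro (⟨ha, _⟩ | h)
      · exact ha
      · obtain ⟨j, hj⟩ := mem_iUnion.1 h
        exact hj.1
  have hd : Disjoint {y : ℝ | 0 < y ∧ intTo y u ≤ 0} (⋃ j, El u lam j) := by
    rw [Set.disjoint_left]
    rintro y ⟨_, hy⟩ hy'
    obtain ⟨j, hj⟩ := mem_iUnion.1 hy'
    exact absurd hy (not_le.2 (bot_le.trans_lt hj.2.1))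
  have hz := mass_le hu hfin (a := 0) bot_le
  rw [lintegral_eq_zero_iff hu] at hz
  have hz' : ∫⁻ x in {y : ℝ | 0 < y ∧ intTo y u ≤ 0}, u x * G x = 0 := by
    rw [lintegral_congr_ae (g := fun _ => 0)]
    · simp
    · filter_upwards [hz] with x hx
      rw [hx]; simp
  rw [hset, lintegral_union (MeasurableSet.iUnion (El_meas lam)) hd, hz', zero_add]

lemma El_tsum_le {u : ℝ → ℝ≥0∞} {lam : ℝ≥0∞} (G : ℝ → ℝ≥0∞) :
    ∑' j, ∫⁻ x in El u lam j, G x ≤ ∫⁻ x in Ioi (0:ℝ), G x := by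
  rw [← lintegral_iUnion (El_meas lam) (El_disj u lam)]
  exact lintegral_mono_set (iUnion_subset fun j y hy => hy.1)

lemma Oin_left {k : ℝ → ℝ → ℝ≥0∞} {D : ℝ≥0∞} (hk : Oinarov k D) (hD1 : 1 ≤ D) (hD : D ≠ ∞)
    {x z y : ℝ} (h0 : 0 ≤ y) (h1 : y ≤ z) (h2 : z ≤ x) : k x z + k z y ≤ D * k x y := by
  have h := (hk.2 x z y h0 h1 h2).1
  have hD0 : D ≠ 0 := (zero_lt_one.trans_le hD1).ne'
  calc k x z + k z y = D * (D⁻¹ * (k x z + k z y)) := by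
        rw [← mul_assoc, ENNReal.mul_inv_cancel hD0 hD, one_mul]
    _ ≤ D * k x y := by gcongr

lemma A0_le {p r : ℝ} {D : ℝ≥0∞} (hr : 0 < r) (hD1 : 1 ≤ D) (hD : D ≠ ∞)
    {u v w : ℝ → ℝ≥0∞} {k : ℝ → ℝ → ℝ≥0∞} (hk : Oinarov k D)
    (hC : CT p r u v w k ≠ ∞) :
    A0 p r u v w k ≤ D * CT p r u v w k := by
  refine leastC_le fun f hf hΨ => ?_
  have h1 : lpN r u (opTinf w k f) ≤ CT p r u v w k * lpN p v f := le_leastC hC hf hΨ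
  rw [mul_assoc]
  refine le_trans ?_ (mul_le_mul_right h1 D)
  have hpt : ∀ x : ℝ, essSup w (volume.restrict (Ici x)) * intTo x (fun z => k x z * f z)
      ≤ D * opTinf w k f x := by
    intro x
    rw [mul_comm, ← ENNReal.essSup_const_mul, opTinf, ← ENNReal.essSup_const_mul]
    refine essSup_mono_ae ?_
    filter_upwards [ae_restrict_mem measurableSet_Ici] with y hy
    rw [mul_left_comm D, mul_comm]
    gcongr
    rw [intTo, intTo, ← lintegral_const_mul' _ _ hD]
    refine (setLIntegral_mono' measurableSet_Ioo fun z hz => ?_).trans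
      (lintegral_mono_set (Ioo_subset_Ioo_right (by exact hy)))
    rw [← mul_assoc]
    gcongr
    exact le_add_self.trans (Oin_left hk hD1 hD hz.1.le hz.2.le hy)
  rw [lpN, ← ENNReal.rpow_le_rpow_iff hr, ENNReal.mul_rpow_of_nonneg _ _ hr.le,
    ← ENNReal.rpow_mul, ← ENNReal.rpow_mul, one_div, inv_mul_cancel₀ hr.ne', ENNReal.rpow_one,
    ENNReal.rpow_one, ← lintegral_const_mul' _ _ (ENNReal.rpow_ne_top_of_nonneg hr.le hD)]
  refine lintegral_mono fun x => ?_
  rw [mul_assoc, ← ENNReal.mul_rpow_of_nonneg _ _ hr.le, ← mul_assoc,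
    ← ENNReal.mul_rpow_of_nonneg _ _ hr.le, mul_comm]
  exact mul_le_mul_left (ENNReal.rpow_le_rpow (hpt x) hr.le) _

lemma A1_le {p r : ℝ} {D : ℝ≥0∞} (hr : 0 < r) (hD1 : 1 ≤ D) (hD : D ≠ ∞)
    {u v w : ℝ → ℝ≥0∞} {k : ℝ → ℝ → ℝ≥0∞} (hk : Oinarov k D)
    (hC : CT p r u v w k ≠ ∞) :
    A1 p r u v w k ≤ D * CT p r u v w k := by
  refine leastC_le fun f hf hΨ => ?_
  have h1 : lpN r u (opTinf w k f) ≤ CT p r u v w k * lpN p v f := le_leastC hC hf hΨ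
  rw [mul_assoc]
  refine le_trans ?_ (mul_le_mul_right h1 D)
  have hpt : ∀ x : ℝ, essSup (fun y => w y * k y x) (volume.restrict (Ici x)) * intTo x f
      ≤ D * opTinf w k f x := by
    intro x
    rw [mul_comm, ← ENNReal.essSup_const_mul, opTinf, ← ENNReal.essSup_const_mul]
    refine essSup_mono_ae ?_
    filter_upwards [ae_restrict_mem measurableSet_Ici] with y hy
    rw [mul_left_comm D, mul_left_comm _ (w y)]
    refine mul_le_mul_right ?_ _
    rw [intTo, intTo, mul_comm, ← lintegral_const_mul' _ _ hD, ← lintegral_const_mul _ hf]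
    refine (setLIntegral_mono' measurableSet_Ioo fun z hz => ?_).trans
      (lintegral_mono_set (Ioo_subset_Ioo_right (by exact hy)))
    rw [← mul_assoc]
    gcongr
    exact le_self_add.trans (Oin_left hk hD1 hD hz.1.le hz.2.le hy)
  rw [lpN, ← ENNReal.rpow_le_rpow_iff hr, ENNReal.mul_rpow_of_nonneg _ _ hr.le,
    ← ENNReal.rpow_mul, ← ENNReal.rpow_mul, one_div, inv_mul_cancel₀ hr.ne', ENNReal.rpow_one,
    ENNReal.rpow_one, ← lintegral_const_mul' _ _ (ENNReal.rpow_ne_top_of_nonneg hr.le hD)]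
  refine lintegral_mono fun x => ?_
  rw [mul_assoc, ← ENNReal.mul_rpow_of_nonneg _ _ hr.le, ← mul_assoc,
    ← ENNReal.mul_rpow_of_nonneg _ _ hr.le, mul_comm]
  exact mul_le_mul_left (ENNReal.rpow_le_rpow (hpt x) hr.le) _

/-- essential supremum over a subset -/
lemma essSup_set_mono {g : ℝ → ℝ≥0∞} {A B : Set ℝ} (h : A ⊆ B) :
    essSup g (volume.restrict A) ≤ essSup g (volume.restrict B) :=
  essSup_mono_measure (Measure.restrict_mono h le_rfl).absolutelyContinuous

lemma opT_anti (w : ℝ → ℝ≥0∞) (k : ℝ → ℝ → ℝ≥0∞) (f : ℝ → ℝ≥0∞) :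
    Antitone (opTinf w k f) := fun _ _ h => essSup_set_mono (Ici_subset_Ici.2 h)

lemma linf_Ht {w : ℝ → ℝ≥0∞} {k : ℝ → ℝ → ℝ≥0∞} {t : ℝ} (ht : 0 < t) (f : ℝ → ℝ≥0∞) :
    linfN w (Ht k t f) = opTinf w k f t := by
  apply le_antisymm
  · refine essSup_le_of_ae_le _ ?_
    have h : ∀ᵐ y ∂(volume.restrict (Ici t)), w y * intTo y (fun z => k y z * f z) ≤
      opTinf w k f t := ENNReal.ae_le_essSup _
    rw [ae_restrict_iff' measurableSet_Ici] at h
    refine ae_restrict_of_ae ?_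
    filter_upwards [h] with y hy
    by_cases hty : t ≤ y
    · simp only [Ht, hty, if_true]; exact hy hty
    · simp [Ht, hty]
  · refine le_trans ?_ (essSup_set_mono (A := Ici t) fun y hy => ht.trans_le hy)
    refine essSup_mono_ae ?_
    filter_upwards [ae_restrict_mem measurableSet_Ici] with y hy
    simp [Ht, mem_Ici.1 hy]

lemma lpN_rpow {r : ℝ} (hr : 0 < r) (u g : ℝ → ℝ≥0∞) :
    lpN r u g ^ r = ∫⁻ x in Ioi (0:ℝ), g x ^ r * u x := by
  rw [lpN, ← ENNReal.rpow_mul, one_div, inv_mul_cancel₀ hr.ne', ENNReal.rpow_one]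

lemma A2_le_of_le {p r : ℝ} (hr : 0 < r) (hpr : p ≤ r)
    {u v w : ℝ → ℝ≥0∞} {k : ℝ → ℝ → ℝ≥0∞}
    (hfin : ∀ t : ℝ, 0 < t → intTo t u ≠ ∞) (hC : CT p r u v w k ≠ ∞) (hu : Measurable u) :
    A2 p r u v w k ≤ CT p r u v w k := by
  rw [A2, if_pos hpr]
  refine iSup₂_le fun t ht => ?_
  by_cases hU : intTo t u = 0
  · rw [hU, ENNReal.zero_rpow_of_pos (by positivity), zero_mul]; exact bot_le
  have hU1 : intTo t u ^ (1/r) ≠ 0 := by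
    rw [Ne, ENNReal.rpow_eq_zero_iff]; simp [hU, hfin t ht]
  have hU2 : intTo t u ^ (1/r) ≠ ∞ := ENNReal.rpow_ne_top_of_nonneg (by positivity) (hfin t ht)
  rw [mul_comm, ← ENNReal.le_div_iff_mul_le (Or.inl hU1) (Or.inl hU2)]
  refine leastC_le fun f hf hΨ => ?_
  have h1 : lpN r u (opTinf w k f) ≤ CT p r u v w k * lpN p v f := le_leastC hC hf hΨ
  rw [linf_Ht ht, ENNReal.mul_comm_div, mul_div_assoc', ENNReal.le_div_iff_mul_le (Or.inl hU1) (Or.inl hU2)]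
  refine le_trans ?_ h1
  rw [← ENNReal.rpow_le_rpow_iff hr, lpN_rpow hr, ENNReal.mul_rpow_of_nonneg _ _ hr.le,
    ← ENNReal.rpow_mul, one_div, inv_mul_cancel₀ hr.ne', ENNReal.rpow_one, intTo,
    ← lintegral_const_mul _ hu]
  refine (setLIntegral_mono' measurableSet_Ioo fun x hx => ?_).trans
    (lintegral_mono_set Ioo_subset_Ioi_self)
  gcongr
  exact opT_anti w k f hx.2.le

/-- auxiliary functional for the lower bound -/
def PhiL (u w : ℝ → ℝ≥0∞) (k : ℝ → ℝ → ℝ≥0∞) (lam : ℝ≥0∞) (j : ℤ) (f : ℝ → ℝ≥0∞) : ℝ≥0∞ :=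
  essSup (fun y => w y * intTo y (fun z => k y z * f z))
    (volume.restrict {y : ℝ | lv lam (j - 1) < intTo y u})

lemma half_le_lv {lam a : ℝ≥0∞} {j : ℤ} (h : a ≤ lv lam (j + 1)) : a / 2 ≤ lv lam j := by
  rw [ENNReal.div_le_iff (by simp) (by simp), mul_comm, ← lv_succ]; exact h

lemma lv_lt_half {lam a : ℝ≥0∞} {j : ℤ} (h : lv lam j < a) : lv lam (j - 1) < a / 2 := by
  rw [ENNReal.lt_div_iff_mul_lt (by simp) (by simp), mul_comm, lv_sub_one]; exact h

lemma Hcd_le_PhiL {u w : ℝ → ℝ≥0∞} (hu : Measurable u)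
    (hfin : ∀ t : ℝ, 0 < t → intTo t u ≠ ∞) {k : ℝ → ℝ → ℝ≥0∞} {lam : ℝ≥0∞} {j : ℤ} {x : ℝ}
    (hx : x ∈ El u lam j) (f : ℝ → ℝ≥0∞) :
    linfN w (Hcd u k (sigmaInv u x) (sigmaF u x) f) ≤ PhiL u w k lam j f := by
  have hU : 0 < intTo x u := bot_le.trans_lt hx.2.1
  have h1 := sInv_spec hu hfin hU
  have hU1 : 0 < intTo (sigmaInv u x) u := by rw [h1.2]; exact ENNReal.half_pos hU.ne'
  have h2 := sInv_spec hu hfin hU1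
  refine essSup_le_of_ae_le _ ?_
  have h : ∀ᵐ y ∂(volume.restrict {y : ℝ | lv lam (j - 1) < intTo y u}),
      w y * intTo y (fun z => k y z * f z) ≤ PhiL u w k lam j f := ENNReal.ae_le_essSup _
  rw [ae_restrict_iff' (measurableSet_lt measurable_const (U_mono u).measurable)] at h
  refine ae_restrict_of_ae ?_
  filter_upwards [h] with y hy
  by_cases hc : sigmaInv u x ≤ y ∧ ENNReal.ofReal y < sigmaF u x
  · simp only [Hcd, hc, if_true, and_self]
    refine le_trans ?_ (hy ?_)
    · gcongr
      exact lintegral_mono_set (Ioo_subset_Ioo_left h2.1.le)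
    · exact (lv_lt_half hx.2.1).trans_le (by rw [← h1.2]; exact U_mono u hc.1)
  · simp [Hcd, hc]

lemma PhiL_le_opT {u w : ℝ → ℝ≥0∞} {k : ℝ → ℝ → ℝ≥0∞} {lam : ℝ≥0∞} {j : ℤ} {x : ℝ}
    (hx : x ∈ El u lam (j - 2)) (f : ℝ → ℝ≥0∞) : PhiL u w k lam j f ≤ opTinf w k f x := by
  refine essSup_set_mono fun y hy => ?_
  have h2 := hx.2.2
  rw [show j - 2 + 1 = j - 1 by ring] at h2
  exact (U_lt (h2.trans_lt hy)).le

lemma PhiL_int {r : ℝ} (hr : 0 < r) {u w : ℝ → ℝ≥0∞} (hu : Measurable u)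
    (hfin : ∀ t : ℝ, 0 < t → intTo t u ≠ ∞) {k : ℝ → ℝ → ℝ≥0∞} {lam : ℝ≥0∞} (ht : lam ≠ ∞)
    {j : ℤ} (hj : lv lam j < Stot u) (f : ℝ → ℝ≥0∞) :
    lv lam (j - 2) * PhiL u w k lam j f ^ r ≤ ∫⁻ x in El u lam (j - 2), opTinf w k f x ^ r * u x := by
  rw [← El_mass hu hfin ht ((lv_mono lam (by omega : j - 2 + 1 ≤ j)).trans hj.le), mul_comm,
    ← lintegral_const_mul _ hu]
  refine setLIntegral_mono' (El_meas _ _) fun x hx => ?_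
  gcongr
  exact PhiL_le_opT hx f

lemma PhiL_fin {p r : ℝ} (hr : 0 < r) {u v w : ℝ → ℝ≥0∞} (hu : Measurable u)
    (hfin : ∀ t : ℝ, 0 < t → intTo t u ≠ ∞) {k : ℝ → ℝ → ℝ≥0∞} {lam : ℝ≥0∞} (h0 : lam ≠ 0)
    (ht : lam ≠ ∞) (hC : CT p r u v w k ≠ ∞)
    {j : ℤ} (hj : lv lam j < Stot u) : leastC (PhiL u w k lam j) (lpN p v) ≠ ∞ := by
  have hU1 : lv lam (j - 2) ^ (1/r) ≠ 0 := by
    rw [Ne, ENNReal.rpow_eq_zero_iff]; simp [(lv_pos h0 _).ne', lv_ne_top ht]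
  have hU2 : lv lam (j - 2) ^ (1/r) ≠ ∞ :=
    ENNReal.rpow_ne_top_of_nonneg (by positivity) (lv_ne_top ht _)
  refine ne_top_of_le_ne_top (ENNReal.div_ne_top hC hU1) (leastC_le fun f hf hΨ => ?_)
  have h1 : lpN r u (opTinf w k f) ≤ CT p r u v w k * lpN p v f := le_leastC hC hf hΨ
  rw [ENNReal.mul_comm_div, mul_div_assoc', ENNReal.le_div_iff_mul_le (Or.inl hU1) (Or.inl hU2)]
  refine le_trans ?_ h1
  rw [← ENNReal.rpow_le_rpow_iff hr, lpN_rpow hr, ENNReal.mul_rpow_of_nonneg _ _ hr.le,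
    ← ENNReal.rpow_mul, one_div, inv_mul_cancel₀ hr.ne', ENNReal.rpow_one, mul_comm]
  exact (PhiL_int hr hu hfin ht hj f).trans (lintegral_mono_set fun y hy => hy.1)

lemma lpN_const_mul {p : ℝ} (hp : 0 < p) {v : ℝ → ℝ≥0∞} {c : ℝ≥0∞} (hc : c ≠ ∞) (f : ℝ → ℝ≥0∞) :
    lpN p v (fun z => c * f z) = c * lpN p v f := by
  have : ∀ z, (c * f z) ^ p * v z = c ^ p * (f z ^ p * v z) := fun z => by
    rw [ENNReal.mul_rpow_of_nonneg _ _ hp.le, mul_assoc]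
  rw [lpN, lpN]
  simp only [this]
  rw [lintegral_const_mul' _ _ (ENNReal.rpow_ne_top_of_nonneg hp.le hc),
    ENNReal.mul_rpow_of_nonneg _ _ (by positivity), ← ENNReal.rpow_mul, one_div,
    mul_inv_cancel₀ hp.ne', ENNReal.rpow_one]

lemma PhiL_const_mul {u w : ℝ → ℝ≥0∞} {k : ℝ → ℝ → ℝ≥0∞} {lam : ℝ≥0∞} {j : ℤ} {c : ℝ≥0∞}
    (hc : c ≠ ∞) (f : ℝ → ℝ≥0∞) :
    PhiL u w k lam j (fun z => c * f z) = c * PhiL u w k lam j f := by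
  rw [PhiL, PhiL, ← ENNReal.essSup_const_mul]
  congr 1
  funext y
  rw [mul_left_comm c, intTo, intTo, ← lintegral_const_mul' _ _ hc]
  simp only [mul_left_comm]

lemma PhiL_mono {u w : ℝ → ℝ≥0∞} {k : ℝ → ℝ → ℝ≥0∞} {lam : ℝ≥0∞} {j : ℤ} {f g : ℝ → ℝ≥0∞}
    (h : ∀ z, f z ≤ g z) : PhiL u w k lam j f ≤ PhiL u w k lam j g := by
  refine essSup_mono_ae (ae_of_all _ fun y => ?_)
  refine mul_le_mul_right (lintegral_mono fun z => mul_le_mul_right (h z) _) _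

lemma exists_ext {p : ℝ} (hp : 0 < p) {u v w : ℝ → ℝ≥0∞} {k : ℝ → ℝ → ℝ≥0∞} {lam : ℝ≥0∞}
    {j : ℤ} (hN : leastC (PhiL u w k lam j) (lpN p v) ≠ ∞) :
    ∃ g : ℝ → ℝ≥0∞, Measurable g ∧ lpN p v g ≤ 1 ∧
      leastC (PhiL u w k lam j) (lpN p v) / 2 ≤ PhiL u w k lam j g := by
  set N := leastC (PhiL u w k lam j) (lpN p v) with hNdef
  by_cases hN0 : N = 0
  · refine ⟨fun _ => 0, measurable_const, ?_, by simp [hN0]⟩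
    rw [lpN]
    simp [hp, ENNReal.zero_rpow_of_pos hp]
  have hlt : N / 2 < N := ENNReal.half_lt_self hN0 hN
  have : ∃ f, Measurable f ∧ lpN p v f ≠ ∞ ∧ N / 2 * lpN p v f < PhiL u w k lam j f := by
    by_contra hcon
    push Not at hcon
    exact absurd (leastC_le hcon) (not_le.2 hlt)
  obtain ⟨f, hf, hΨ, hlt⟩ := this
  have h0 : lpN p v f ≠ 0 := by
    intro h0
    have := le_leastC hN hf hΨ
    rw [h0, mul_zero] at this hlt
    exact absurd hlt (not_lt.2 this)
  have hinv : (lpN p v f)⁻¹ ≠ ∞ := ENNReal.inv_ne_top.2 h0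
  refine ⟨fun z => (lpN p v f)⁻¹ * f z, hf.const_mul _, ?_, ?_⟩
  · rw [lpN_const_mul hp hinv, ENNReal.inv_mul_cancel h0 hΨ]
  · rw [PhiL_const_mul hinv]
    calc N / 2 = (lpN p v f)⁻¹ * (N / 2 * lpN p v f) := by
          rw [mul_left_comm, ENNReal.inv_mul_cancel h0 hΨ, mul_one]
      _ ≤ _ := by gcongr

lemma solve_ineq {Sg c C : ℝ≥0∞} {p r : ℝ} (hr : 0 < r) (hrp : r < p) (hSg : Sg ≠ ∞)
    (h : Sg ≤ c * C ^ r * Sg ^ (r / p)) : Sg ^ (1 / r - 1 / p) ≤ c ^ (1 / r) * C := by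
  have hp : 0 < p := hr.trans hrp
  have hs : 0 < 1 / r - 1 / p := sub_pos.2 (one_div_lt_one_div_of_lt hr hrp)
  by_cases h0 : Sg = 0
  · rw [h0, ENNReal.zero_rpow_of_pos hs]; exact bot_le
  rw [← ENNReal.rpow_le_rpow_iff hr, ENNReal.mul_rpow_of_nonneg _ _ hr.le, ← ENNReal.rpow_mul,
    ← ENNReal.rpow_mul, one_div, inv_mul_cancel₀ hr.ne', ENNReal.rpow_one]
  have h2 : (r⁻¹ - 1 / p) * r = 1 - r / p := by field_simp
  rw [h2, ENNReal.rpow_sub _ _ h0 hSg, ENNReal.rpow_one]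
  apply ENNReal.div_le_of_le_mul
  exact h

lemma sum_bound {p r : ℝ} (hr : 0 < r) (hrp : r < p) {u v w : ℝ → ℝ≥0∞} (hu : Measurable u)
    (hv : Measurable v)
    (hfin : ∀ t : ℝ, 0 < t → intTo t u ≠ ∞) {k : ℝ → ℝ → ℝ≥0∞} {lam : ℝ≥0∞} (h0 : lam ≠ 0)
    (ht : lam ≠ ∞) (hC : CT p r u v w k ≠ ∞) (F : Finset ℤ) (hF : ∀ j ∈ F, lv lam j < Stot u) :
    (∑ j ∈ F, (lv lam j ^ (1 / r) * leastC (PhiL u w k lam j) (lpN p v)) ^ (1 / r - 1 / p)⁻¹)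
      ^ (1 / r - 1 / p) ≤ (4 * 2 ^ r) ^ (1 / r) * CT p r u v w k := by
  have hp : 0 < p := hr.trans hrp
  have hs' : 0 < 1 / r - 1 / p := sub_pos.2 (one_div_lt_one_div_of_lt hr hrp)
  set s : ℝ := (1 / r - 1 / p)⁻¹ with hsdef
  have hs : 0 < s := inv_pos.2 hs'
  set N : ℤ → ℝ≥0∞ := fun j => leastC (PhiL u w k lam j) (lpN p v) with hN
  set X : ℤ → ℝ≥0∞ := fun j => lv lam j ^ (1 / r) * N j with hX
  have hNt : ∀ j ∈ F, N j ≠ ∞ := fun j hj => PhiL_fin hr hu hfin h0 ht hC (hF j hj)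
  have hXt : ∀ j ∈ F, X j ≠ ∞ := fun j hj => ENNReal.mul_ne_top
    (ENNReal.rpow_ne_top_of_nonneg (by positivity) (lv_ne_top ht _)) (hNt j hj)
  have hext : ∀ j : ℤ, ∃ g : ℝ → ℝ≥0∞, Measurable g ∧ lpN p v g ≤ 1 ∧
      (j ∈ F → N j / 2 ≤ PhiL u w k lam j g) := by
    intro j
    by_cases hj : j ∈ F
    · obtain ⟨g, h1, h2, h3⟩ := exists_ext hp (hNt j hj)
      exact ⟨g, h1, h2, fun _ => h3⟩
    · refine ⟨fun _ => 0, measurable_const, ?_, fun h => absurd h hj⟩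
      rw [lpN]
      simp [hp, ENNReal.zero_rpow_of_pos hp]
  choose g hgm hg1 hgN using hext
  have hat : ∀ j ∈ F, X j ^ (s / p) ≠ ∞ := fun j hj =>
    ENNReal.rpow_ne_top_of_nonneg (by positivity) (hXt j hj)
  set f : ℝ → ℝ≥0∞ := fun z => (∑ j ∈ F, (X j ^ (s / p) * g j z) ^ p) ^ (1 / p) with hf
  have hfm : Measurable f := by
    refine Measurable.pow_const ?_ _
    exact Finset.measurable_sum _ fun j _ => ((hgm j).const_mul _).pow_const _
  have hfp : ∀ z, f z ^ p = ∑ j ∈ F, (X j ^ (s / p) * g j z) ^ p := fun z => by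
    rw [hf]
    simp only
    rw [← ENNReal.rpow_mul, one_div, inv_mul_cancel₀ hp.ne', ENNReal.rpow_one]
  have hgf : ∀ j ∈ F, ∀ z, X j ^ (s / p) * g j z ≤ f z := by
    intro j hj z
    rw [← ENNReal.rpow_le_rpow_iff hp, hfp]
    exact Finset.single_le_sum (f := fun j => (X j ^ (s / p) * g j z) ^ p)
      (fun _ _ => bot_le) hj
  have hΨ : lpN p v f ^ p ≤ ∑ j ∈ F, X j ^ s := by
    rw [lpN_rpow hp]
    simp only [hfp, Finset.sum_mul]
    have hmm : ∀ j ∈ F, Measurable fun z => (X j ^ (s / p) * g j z) ^ p * v z :=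
      fun j _ => (((hgm j).const_mul _).pow_const _).mul hv
    rw [lintegral_finsetSum _ hmm]
    refine Finset.sum_le_sum fun j hj => ?_
    rw [← lpN_rpow hp v (fun z => X j ^ (s / p) * g j z), lpN_const_mul hp (hat j hj)]
    calc (X j ^ (s / p) * lpN p v (g j)) ^ p ≤ (X j ^ (s / p) * 1) ^ p := by gcongr; exact hg1 j
      _ = X j ^ s := by rw [mul_one, ← ENNReal.rpow_mul, div_mul_cancel₀ _ hp.ne']
  have hSgt : ∑ j ∈ F, X j ^ s ≠ ∞ := by
    rw [ENNReal.sum_ne_top]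
    exact fun j hj => ENNReal.rpow_ne_top_of_nonneg hs.le (hXt j hj)
  have hΨt : lpN p v f ≠ ∞ := by
    intro h
    rw [h, ENNReal.top_rpow_of_pos hp] at hΨ
    exact hSgt (top_le_iff.1 hΨ)
  have h1 : lpN r u (opTinf w k f) ≤ CT p r u v w k * lpN p v f := le_leastC hC hfm hΨt
  have h2 : ∑ j ∈ F, lv lam (j - 2) * (X j ^ (s / p) * (N j / 2)) ^ r ≤
      (CT p r u v w k * lpN p v f) ^ r := by
    refine le_trans ?_ (ENNReal.rpow_le_rpow h1 hr.le)
    rw [lpN_rpow hr]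
    calc _ ≤ ∑ j ∈ F, ∫⁻ x in El u lam (j - 2), opTinf w k f x ^ r * u x := by
          refine Finset.sum_le_sum fun j hj => ?_
          refine le_trans ?_ (PhiL_int hr hu hfin ht (hF j hj) f)
          gcongr
          calc X j ^ (s / p) * (N j / 2) ≤ X j ^ (s / p) * PhiL u w k lam j (g j) := by
                gcongr; exact hgN j hj
            _ = PhiL u w k lam j (fun z => X j ^ (s / p) * g j z) :=
                (PhiL_const_mul (hat j hj) _).symm
            _ ≤ _ := PhiL_mono (hgf j hj)
      _ ≤ ∑' j : ℤ, ∫⁻ x in El u lam (j - 2), opTinf w k f x ^ r * u x :=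
          ENNReal.sum_le_tsum F
      _ = ∑' j : ℤ, ∫⁻ x in El u lam j, opTinf w k f x ^ r * u x :=
          (Equiv.subRight (2:ℤ)).tsum_eq (fun j => ∫⁻ x in El u lam j, opTinf w k f x ^ r * u x)
      _ ≤ _ := El_tsum_le _
  apply solve_ineq hr hrp hSgt
  have hterm : ∀ j, X j ^ s = (4 * 2 ^ r) * (lv lam (j - 2) * (X j ^ (s / p) * (N j / 2)) ^ r) := by
    intro j
    have e1 : lv lam j = 4 * lv lam (j - 2) := by
      rw [← lv_sub_one, ← lv_sub_one lam (j - 1), show j - 1 - 1 = j - 2 by ring]; ring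
    have e2 : X j ^ s = X j ^ r * X j ^ (s / p * r) := by
      rw [← ENNReal.rpow_add_of_nonneg _ _ hr.le (by positivity)]
      congr 1
      have : s * (1 / r - 1 / p) = 1 := inv_mul_cancel₀ hs'.ne'
      field_simp at this ⊢
      linarith
    have e3 : X j ^ r = lv lam j * N j ^ r := by
      rw [hX]
      simp only
      rw [ENNReal.mul_rpow_of_nonneg _ _ hr.le, ← ENNReal.rpow_mul, one_div,
        inv_mul_cancel₀ hr.ne', ENNReal.rpow_one]
    have e4 : (2:ℝ≥0∞) ^ r * (N j / 2) ^ r = N j ^ r := by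
      rw [← ENNReal.mul_rpow_of_nonneg _ _ hr.le, ENNReal.mul_div_cancel (by simp) (by simp)]
    rw [e2, e3, e1, ENNReal.mul_rpow_of_nonneg _ _ hr.le, ← ENNReal.rpow_mul, ← e4]
    ring
  calc ∑ j ∈ F, X j ^ s
      = (4 * 2 ^ r) * ∑ j ∈ F, lv lam (j - 2) * (X j ^ (s / p) * (N j / 2)) ^ r := by
        rw [Finset.mul_sum]; exact Finset.sum_congr rfl fun j _ => hterm j
    _ ≤ (4 * 2 ^ r) * (CT p r u v w k * lpN p v f) ^ r := by gcongr
    _ ≤ (4 * 2 ^ r) * (CT p r u v w k ^ r * (∑ j ∈ F, X j ^ s) ^ (r / p)) := by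
        rw [ENNReal.mul_rpow_of_nonneg _ _ hr.le]
        gcongr
        calc lpN p v f ^ r = (lpN p v f ^ p) ^ (r / p) := by
              rw [← ENNReal.rpow_mul, mul_div_cancel₀ _ hp.ne']
          _ ≤ _ := by gcongr
    _ = _ := by ring

lemma A2_le_of_lt {p r : ℝ} (hr : 0 < r) (hrp : r < p) {u v w : ℝ → ℝ≥0∞} (hu : Measurable u)
    (hv : Measurable v) (hS : Stot u ≠ 0)
    (hfin : ∀ t : ℝ, 0 < t → intTo t u ≠ ∞) {k : ℝ → ℝ → ℝ≥0∞}
    (hC : CT p r u v w k ≠ ∞) :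
    A2 p r u v w k ≤ 2 ^ (1 / p) * ((4 * 2 ^ r) ^ (1 / r)) * CT p r u v w k := by
  obtain ⟨lam, h0, ht, hl⟩ := exists_lam hS
  have hp : 0 < p := hr.trans hrp
  have hs' : 0 < 1 / r - 1 / p := sub_pos.2 (one_div_lt_one_div_of_lt hr hrp)
  rw [A2, if_neg (not_le.2 hrp)]
  have hsb := fun F hF => sum_bound hr hrp hu hv hfin h0 ht hC F hF
  set s : ℝ := (1 / r - 1 / p)⁻¹ with hsdef
  have hs : 0 < s := inv_pos.2 hs'
  have hs1 : s * (1 / r - 1 / p) = 1 := inv_mul_cancel₀ hs'.ne'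
  set N : ℤ → ℝ≥0∞ := fun j => leastC (PhiL u w k lam j) (lpN p v) with hN
  set X : ℤ → ℝ≥0∞ := fun j => lv lam j ^ (1 / r) * N j with hX
  set K := (4 * 2 ^ r) ^ (1 / r) * CT p r u v w k with hK
  classical
  have hall : ∑' j, (if lv lam j < Stot u then X j ^ s else 0) ≤ K ^ s := by
    rw [ENNReal.tsum_eq_iSup_sum]
    refine iSup_le fun F => ?_
    rw [← Finset.sum_filter]
    have := hsb (F.filter fun j => lv lam j < Stot u) (fun j hj => (Finset.mem_filter.1 hj).2)
    have := ENNReal.rpow_le_rpow this hs.le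
    rwa [← ENNReal.rpow_mul, mul_comm _ s, hs1, ENNReal.rpow_one] at this
  have hI : ∫⁻ x in Ioi (0:ℝ), u x * (intTo x u) ^ (s / p) *
        leastC (fun f => linfN w (Hcd u k (sigmaInv u x) (sigmaF u x) f)) (lpN p v) ^ s ≤
      2 ^ (s / p) * K ^ s := by
    simp only [mul_assoc]
    rw [lint_split hu hfin h0 ht]
    refine le_trans ?_ (mul_le_mul_right hall _)
    rw [← ENNReal.tsum_mul_left]
    refine ENNReal.tsum_le_tsum fun j => ?_
    by_cases hj : lv lam j < Stot u
    · rw [if_pos hj]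
      calc _ ≤ ∫⁻ x in El u lam j, u x * ((2 * lv lam j) ^ (s / p) * N j ^ s) := by
            refine setLIntegral_mono' (El_meas _ _) fun x hx => ?_
            gcongr
            · rw [← lv_succ]; exact hx.2.2
            · exact leastC_mono fun f => Hcd_le_PhiL hu hfin hx f
        _ = lv lam j * ((2 * lv lam j) ^ (s / p) * N j ^ s) := by
            rw [lintegral_mul_const _ hu, El_mass hu hfin ht (hl j hj)]
        _ = 2 ^ (s / p) * X j ^ s := by
            rw [hX]
            simp only
            rw [ENNReal.mul_rpow_of_nonneg _ _ hs.le, ENNReal.mul_rpow_of_nonneg _ _ (by positivity),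
              ← ENNReal.rpow_mul]
            have : lv lam j ^ (1 / r * s) = lv lam j * lv lam j ^ (s / p) := by
              nth_rw 2 [← ENNReal.rpow_one (lv lam j)]
              rw [← ENNReal.rpow_add_of_nonneg _ _ zero_le_one (by positivity)]
              congr 1
              field_simp at hs1 ⊢
              linarith
            rw [this]
            ring
        _ ≤ _ := le_rfl
    · have : El u lam j = ∅ := eq_empty_of_forall_notMem fun x hx => hj (El_lt_S hx)
      simp [this]
  calc _ ≤ (2 ^ (s / p) * K ^ s) ^ (1 / r - 1 / p) := by gcongr
    _ = 2 ^ (1 / p) * K := by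
      rw [ENNReal.mul_rpow_of_nonneg _ _ hs'.le, ← ENNReal.rpow_mul, ← ENNReal.rpow_mul, hs1,
        ENNReal.rpow_one]
      congr 2
      rw [div_mul_eq_mul_div, hs1]
    _ = _ := by rw [hK, mul_assoc]

/-- auxiliary functional for the upper bound -/
def PhiU (u w : ℝ → ℝ≥0∞) (k : ℝ → ℝ → ℝ≥0∞) (lam : ℝ≥0∞) (j : ℤ) (f : ℝ → ℝ≥0∞) : ℝ≥0∞ :=
  essSup (fun y => w y * ∫⁻ z in Ioo 0 y ∩ {z | lv lam (j - 1) < intTo z u}, k y z * f z)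
    (volume.restrict (El u lam j))

lemma PhiU_le_Hcd {u w : ℝ → ℝ≥0∞} (hu : Measurable u)
    (hfin : ∀ t : ℝ, 0 < t → intTo t u ≠ ∞) {k : ℝ → ℝ → ℝ≥0∞} {lam : ℝ≥0∞} {j : ℤ} {x : ℝ}
    (hx : x ∈ El u lam j) (f : ℝ → ℝ≥0∞) :
    PhiU u w k lam j f ≤ linfN w (Hcd u k (sigmaInv u x) (sigmaF u x) f) := by
  have hU : 0 < intTo x u := bot_le.trans_lt hx.2.1
  have h1 := sInv_spec hu hfin hU
  have hU1 : 0 < intTo (sigmaInv u x) u := by rw [h1.2]; exact ENNReal.half_pos hU.ne'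
  have h2 := sInv_spec hu hfin hU1
  refine le_trans ?_ (essSup_set_mono (A := El u lam j) fun y hy => hy.1)
  refine essSup_mono_ae ?_
  filter_upwards [ae_restrict_mem (El_meas lam j)] with y hy
  have hc1 : sigmaInv u x ≤ y := by
    refine (U_lt (u := u) ?_).le
    rw [h1.2]
    exact (half_le_lv hx.2.2).trans_lt hy.2.1
  have hc2 : ENNReal.ofReal y < sigmaF u x := by
    refine lt_sigma hu hfin (hy.2.2.trans_lt ?_)
    rw [lv_succ]
    exact ENNReal.mul_lt_mul_right (by simp) (by simp) hx.2.1
  simp only [Hcd, hc1, hc2, and_self, if_true]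
  refine mul_le_mul_right (lintegral_mono_set ?_) _
  intro z hz
  refine ⟨U_lt (u := u) ?_, hz.1.2⟩
  refine lt_of_le_of_lt ?_ hz.2
  rw [h2.2, h1.2]
  apply half_le_lv
  rw [sub_add_cancel]
  exact half_le_lv hx.2.2

lemma PhiU_le_opT {u w : ℝ → ℝ≥0∞} {k : ℝ → ℝ → ℝ≥0∞} {lam : ℝ≥0∞} {j : ℤ} {t : ℝ}
    (ht : t ∈ El u lam (j - 1)) (f : ℝ → ℝ≥0∞) : PhiU u w k lam j f ≤ opTinf w k f t := by
  have h2 := ht.2.2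
  rw [sub_add_cancel] at h2
  refine le_trans ?_ (essSup_set_mono (A := El u lam j) fun y hy => (U_lt (h2.trans_lt hy.2.1)).le)
  refine essSup_mono_ae (ae_of_all _ fun y => ?_)
  exact mul_le_mul_right (lintegral_mono_set inter_subset_left) _

lemma PhiU_empty {u w : ℝ → ℝ≥0∞} {k : ℝ → ℝ → ℝ≥0∞} {lam : ℝ≥0∞} {j : ℤ}
    (h : ¬ lv lam j < Stot u) (f : ℝ → ℝ≥0∞) : PhiU u w k lam j f = 0 := by
  have : El u lam j = ∅ := eq_empty_of_forall_notMem fun x hx => h (El_lt_S hx)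
  rw [PhiU, this, Measure.restrict_empty, essSup_measure_zero]; rfl

lemma M_empty {p : ℝ} {u v w : ℝ → ℝ≥0∞} {k : ℝ → ℝ → ℝ≥0∞} {lam : ℝ≥0∞} {j : ℤ}
    (h : ¬ lv lam j < Stot u) : leastC (PhiU u w k lam j) (lpN p v) = 0 :=
  le_antisymm (leastC_le fun f _ _ => by rw [PhiU_empty h]; exact bot_le) bot_le

lemma M_le {p r : ℝ} (hr : 0 < r) (hpr : p ≤ r) {u v w : ℝ → ℝ≥0∞} (hu : Measurable u)
    (hfin : ∀ t : ℝ, 0 < t → intTo t u ≠ ∞) {k : ℝ → ℝ → ℝ≥0∞} {lam : ℝ≥0∞} (h0 : lam ≠ 0)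
    (ht : lam ≠ ∞) (j : ℤ) :
    lv lam (j - 1) ^ (1 / r) * leastC (PhiU u w k lam j) (lpN p v) ≤ A2 p r u v w k := by
  by_cases hj : lv lam j < Stot u
  · have hm : ∫⁻ x in El u lam (j - 1), u x = lv lam (j - 1) :=
      El_mass hu hfin ht (by rw [sub_add_cancel]; exact hj.le)
    have hne : (El u lam (j - 1)).Nonempty := by
      by_contra hc
      rw [not_nonempty_iff_eq_empty.1 hc] at hm
      simp only [Measure.restrict_empty, lintegral_zero_measure] at hm
      exact (lv_pos h0 _).ne hm
    obtain ⟨t, htE⟩ := hne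
    rw [A2, if_pos hpr]
    refine le_trans ?_ (le_iSup₂ (f := fun (t : ℝ) (_ : 0 < t) => (intTo t u) ^ (1/r) *
      leastC (fun f => linfN w (Ht k t f)) (lpN p v)) t htE.1)
    gcongr
    · exact htE.2.1.le
    · exact leastC_mono fun f => by rw [linf_Ht htE.1]; exact PhiU_le_opT htE f
  · rw [M_empty hj, mul_zero]; exact bot_le

lemma M_sum_le {p r : ℝ} (hr : 0 < r) (hrp : r < p) {u v w : ℝ → ℝ≥0∞} (hu : Measurable u)
    (hfin : ∀ t : ℝ, 0 < t → intTo t u ≠ ∞) {k : ℝ → ℝ → ℝ≥0∞} {lam : ℝ≥0∞}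
    (ht : lam ≠ ∞) (hl : ∀ j, lv lam j < Stot u → lv lam (j + 1) ≤ Stot u) :
    (∑' j, (lv lam j ^ (1 / r) * leastC (PhiU u w k lam j) (lpN p v)) ^ (1 / r - 1 / p)⁻¹)
      ^ (1 / r - 1 / p) ≤ A2 p r u v w k := by
  have hp : 0 < p := hr.trans hrp
  have hs' : 0 < 1 / r - 1 / p := sub_pos.2 (one_div_lt_one_div_of_lt hr hrp)
  rw [A2, if_neg (not_le.2 hrp)]
  set s : ℝ := (1 / r - 1 / p)⁻¹ with hsdef
  have hs : 0 < s := inv_pos.2 hs'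
  have hs1 : s * (1 / r - 1 / p) = 1 := inv_mul_cancel₀ hs'.ne'
  refine ENNReal.rpow_le_rpow ?_ hs'.le
  refine le_trans ?_ (El_tsum_le (u := u) (lam := lam) _)
  refine ENNReal.tsum_le_tsum fun j => ?_
  by_cases hj : lv lam j < Stot u
  · calc _ = lv lam j * (lv lam j ^ (s / p) * leastC (PhiU u w k lam j) (lpN p v) ^ s) := by
          rw [ENNReal.mul_rpow_of_nonneg _ _ hs.le, ← ENNReal.rpow_mul]
          have : lv lam j ^ (1 / r * s) = lv lam j * lv lam j ^ (s / p) := by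
            nth_rw 2 [← ENNReal.rpow_one (lv lam j)]
            rw [← ENNReal.rpow_add_of_nonneg _ _ zero_le_one (by positivity)]
            congr 1
            field_simp at hs1 ⊢
            linarith
          rw [this]
          ring
      _ = ∫⁻ x in El u lam j, u x * (lv lam j ^ (s / p) *
            leastC (PhiU u w k lam j) (lpN p v) ^ s) := by
          rw [lintegral_mul_const _ hu, El_mass hu hfin ht (hl j hj)]
      _ ≤ _ := by
          refine setLIntegral_mono' (El_meas _ _) fun x hx => ?_
          rw [mul_assoc]
          gcongr
          · exact hx.2.1.le
          · exact leastC_mono fun f => PhiU_le_Hcd hu hfin hx f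
  · rw [M_empty hj, mul_zero, ENNReal.zero_rpow_of_pos hs]; exact bot_le

lemma tsum_rpow_le {a : ℤ → ℝ≥0∞} {θ : ℝ} (hθ : 1 ≤ θ) :
    ∑' j, a j ^ θ ≤ (∑' j, a j) ^ θ := by
  have e : ∀ x : ℝ≥0∞, x ^ θ = x * x ^ (θ - 1) := fun x => by
    nth_rw 2 [← ENNReal.rpow_one x]
    rw [← ENNReal.rpow_add_of_nonneg _ _ zero_le_one (by linarith)]
    congr 1; ring
  calc ∑' j, a j ^ θ ≤ ∑' j, a j * (∑' j, a j) ^ (θ - 1) := by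
        refine ENNReal.tsum_le_tsum fun j => ?_
        rw [e]
        have : a j ≤ ∑' j, a j := ENNReal.le_tsum j
        have h2 := ENNReal.rpow_le_rpow this (by linarith : 0 ≤ θ - 1)
        exact mul_le_mul_right h2 _
    _ = _ := by rw [ENNReal.tsum_mul_right, e (∑' j, a j)]

lemma holder_tsum {a b : ℤ → ℝ≥0∞} {P Q : ℝ} (h : P.HolderConjugate Q) :
    ∑' j, a j * b j ≤ (∑' j, a j ^ P) ^ (1 / P) * (∑' j, b j ^ Q) ^ (1 / Q) := by
  have := ENNReal.lintegral_mul_le_Lp_mul_Lq (Measure.count : Measure ℤ) h (f := a) (g := b)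
    (measurable_from_top).aemeasurable (measurable_from_top).aemeasurable
  simpa [lintegral_count] using this

lemma sumB {p r : ℝ} (hp : 1 ≤ p) (hr : 0 < r) {u v w : ℝ → ℝ≥0∞} (hu : Measurable u)
    (hfin : ∀ t : ℝ, 0 < t → intTo t u ≠ ∞) {k : ℝ → ℝ → ℝ≥0∞} {lam : ℝ≥0∞} (h0 : lam ≠ 0)
    (ht : lam ≠ ∞) (hl : ∀ j, lv lam j < Stot u → lv lam (j + 1) ≤ Stot u)
    (hA : A2 p r u v w k ≠ ∞) {f : ℝ → ℝ≥0∞} (hf : Measurable f) (hΨ : lpN p v f ≠ ∞) :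
    ∑' j, lv lam (j - 1) * PhiU u w k lam j f ^ r ≤
      2 ^ (r / p) * (A2 p r u v w k * lpN p v f) ^ r := by
  have hp0 : 0 < p := by linarith
  set M : ℤ → ℝ≥0∞ := fun j => leastC (PhiU u w k lam j) (lpN p v) with hM
  set Q : ℤ → Set ℝ := fun j => El u lam (j - 1) ∪ El u lam j with hQ
  have hQm : ∀ j, MeasurableSet (Q j) := fun j => (El_meas _ _).union (El_meas _ _)
  set a : ℤ → ℝ≥0∞ := fun j => ∫⁻ x in Q j, f x ^ p * v x with ha
  have hsa : ∑' j, a j ≤ 2 * lpN p v f ^ p := by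
    rw [lpN_rpow hp0]
    calc ∑' j, a j ≤ ∑' j, ((∫⁻ x in El u lam (j - 1), f x ^ p * v x) +
          ∫⁻ x in El u lam j, f x ^ p * v x) :=
          ENNReal.tsum_le_tsum fun j => lintegral_union_le _ _ _
      _ = (∑' j, ∫⁻ x in El u lam j, f x ^ p * v x) +
          ∑' j, ∫⁻ x in El u lam j, f x ^ p * v x := by
          rw [ENNReal.tsum_add]
          congr 1
          exact (Equiv.subRight (1:ℤ)).tsum_eq (fun j => ∫⁻ x in El u lam j, f x ^ p * v x)
      _ ≤ _ := by rw [two_mul]; exact add_le_add (El_tsum_le _) (El_tsum_le _)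
  have hind : ∀ j, lpN p v ((Q j).indicator f) ^ p = a j := by
    intro j
    rw [lpN_rpow hp0]
    have : ∀ x, (Q j).indicator f x ^ p * v x = (Q j).indicator (fun x => f x ^ p * v x) x := by
      intro x
      by_cases hx : x ∈ Q j
      · simp [hx]
      · simp [hx, ENNReal.zero_rpow_of_pos hp0]
    simp only [this]
    rw [lintegral_indicator (hQm j), Measure.restrict_restrict (hQm j), inter_eq_left.2]
    rintro y (hy | hy) <;> exact hy.1
  have hloc : ∀ j, PhiU u w k lam j f ≤ PhiU u w k lam j ((Q j).indicator f) := by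
    intro j
    refine essSup_mono_ae ?_
    filter_upwards [ae_restrict_mem (El_meas lam j)] with y hy
    refine mul_le_mul_right (setLIntegral_mono' ?_ fun z hz => ?_) _
    · exact measurableSet_Ioo.inter (measurableSet_lt measurable_const (U_mono u).measurable)
    · have : z ∈ Q j := by
        by_cases hc : intTo z u ≤ lv lam j
        · refine Or.inl ⟨hz.1.1, hz.2, ?_⟩
          rw [sub_add_cancel]; exact hc
        · exact Or.inr ⟨hz.1.1, not_le.1 hc, (U_mono u hz.1.2.le).trans hy.2.2⟩
      simp [this]
  have hB : ∀ j, M j ≠ ∞ → PhiU u w k lam j f ^ r ≤ M j ^ r * a j ^ (r / p) := by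
    intro j hMj
    have hle : lpN p v ((Q j).indicator f) ≤ lpN p v f := by
      rw [lpN, lpN]
      refine ENNReal.rpow_le_rpow (lintegral_mono fun x => ?_) (by positivity)
      refine mul_le_mul_left (ENNReal.rpow_le_rpow ?_ hp0.le) _
      exact indicator_le_self _ _ x
    have h1 := (hloc j).trans (le_leastC hMj (hf.indicator (hQm j)) (ne_top_of_le_ne_top hΨ hle))
    refine (ENNReal.rpow_le_rpow h1 hr.le).trans ?_
    rw [ENNReal.mul_rpow_of_nonneg _ _ hr.le, ← hind, ← ENNReal.rpow_mul,
      mul_div_cancel₀ _ hp0.ne']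
  have hfinal : (∑' j, a j) ^ (r / p) ≤ 2 ^ (r / p) * lpN p v f ^ r := by
    calc _ ≤ (2 * lpN p v f ^ p) ^ (r / p) := by gcongr
      _ = _ := by
        rw [ENNReal.mul_rpow_of_nonneg _ _ (by positivity), ← ENNReal.rpow_mul,
          mul_div_cancel₀ _ hp0.ne']
  rcases le_or_gt p r with hpr | hrp
  · have hMj : ∀ j, lv lam (j - 1) ^ (1 / r) * M j ≤ A2 p r u v w k := fun j =>
      M_le hr hpr hu hfin h0 ht j
    have hMt : ∀ j, M j ≠ ∞ := by
      intro j hc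
      have := hMj j
      rw [hc, ENNReal.mul_top] at this
      · exact hA (top_le_iff.1 this)
      · rw [Ne, ENNReal.rpow_eq_zero_iff]; simp [(lv_pos h0 _).ne', lv_ne_top ht]
    calc _ ≤ ∑' j, A2 p r u v w k ^ r * a j ^ (r / p) := by
          refine ENNReal.tsum_le_tsum fun j => ?_
          calc _ ≤ lv lam (j - 1) * (M j ^ r * a j ^ (r / p)) := by gcongr; exact hB j (hMt j)
            _ = (lv lam (j - 1) ^ (1 / r) * M j) ^ r * a j ^ (r / p) := by
              rw [ENNReal.mul_rpow_of_nonneg _ _ hr.le, ← ENNReal.rpow_mul, one_div,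
                inv_mul_cancel₀ hr.ne', ENNReal.rpow_one, mul_assoc]
            _ ≤ _ := by gcongr; exact hMj j
      _ ≤ A2 p r u v w k ^ r * (∑' j, a j) ^ (r / p) := by
          rw [ENNReal.tsum_mul_left]
          gcongr
          exact tsum_rpow_le ((one_le_div hp0).2 hpr)
      _ ≤ A2 p r u v w k ^ r * (2 ^ (r / p) * lpN p v f ^ r) := by gcongr
      _ = _ := by rw [ENNReal.mul_rpow_of_nonneg _ _ hr.le]; ring
  · have hs' : 0 < 1 / r - 1 / p := sub_pos.2 (one_div_lt_one_div_of_lt hr hrp)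
    have hMs := M_sum_le (v := v) (w := w) (k := k) hr hrp hu hfin ht hl
    set s : ℝ := (1 / r - 1 / p)⁻¹ with hsdef
    have hs : 0 < s := inv_pos.2 hs'
    have hs1 : s * (1 / r - 1 / p) = 1 := inv_mul_cancel₀ hs'.ne'
    have hMt : ∀ j, M j ≠ ∞ := by
      intro j hc
      have h1 : (∑' j, (lv lam j ^ (1 / r) * M j) ^ s) ≠ ∞ := by
        intro h
        rw [h, ENNReal.top_rpow_of_pos hs'] at hMs
        exact hA (top_le_iff.1 hMs)
      have h2 := ENNReal.ne_top_of_tsum_ne_top h1 j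
      apply h2
      rw [hc, ENNReal.mul_top, ENNReal.top_rpow_of_pos hs]
      rw [Ne, ENNReal.rpow_eq_zero_iff]; simp [(lv_pos h0 _).ne', lv_ne_top ht]
    have hconj : (s / r).HolderConjugate (p / r) := by
      rw [Real.holderConjugate_iff]
      have e : (s / r)⁻¹ + (p / r)⁻¹ = 1 := by
        rw [inv_div, inv_div]
        field_simp at hs1 ⊢
        linarith
      refine ⟨?_, e⟩
      rw [one_lt_div hr]
      field_simp at hs1
      nlinarith
    calc _ ≤ ∑' j, (lv lam j ^ (1 / r) * M j) ^ r * a j ^ (r / p) := by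
          refine ENNReal.tsum_le_tsum fun j => ?_
          calc _ ≤ lv lam j * (M j ^ r * a j ^ (r / p)) := by
                gcongr
                · exact lv_mono lam (by omega)
                · exact hB j (hMt j)
            _ = (lv lam j ^ (1 / r) * M j) ^ r * a j ^ (r / p) := by
              rw [ENNReal.mul_rpow_of_nonneg _ _ hr.le, ← ENNReal.rpow_mul, one_div,
                inv_mul_cancel₀ hr.ne', ENNReal.rpow_one, mul_assoc]
      _ ≤ _ := holder_tsum hconj
      _ = ((∑' j, (lv lam j ^ (1 / r) * M j) ^ s) ^ (1 / r - 1 / p)) ^ r *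
          (∑' j, a j) ^ (r / p) := by
          simp only [← ENNReal.rpow_mul]
          rw [mul_div_cancel₀ _ hr.ne', div_mul_div_cancel₀ hp0.ne', div_self hr.ne']
          simp only [ENNReal.rpow_one, one_div_div]
          congr 2
          rw [div_eq_mul_inv, hsdef, inv_inv, mul_comm]
      _ ≤ A2 p r u v w k ^ r * (2 ^ (r / p) * lpN p v f ^ r) := by gcongr
      _ = _ := by rw [ENNReal.mul_rpow_of_nonneg _ _ hr.le]; ring

/-- block essential supremum -/
def bl (u w : ℝ → ℝ≥0∞) (k : ℝ → ℝ → ℝ≥0∞) (lam : ℝ≥0∞) (f : ℝ → ℝ≥0∞) (j : ℤ) : ℝ≥0∞ :=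
  essSup (fun y => w y * intTo y (fun z => k y z * f z)) (volume.restrict (El u lam j))

lemma opT_le_tsum {r : ℝ} (hr : 0 < r) {u w : ℝ → ℝ≥0∞} {k : ℝ → ℝ → ℝ≥0∞} {lam : ℝ≥0∞}
    (hfin : ∀ t : ℝ, 0 < t → intTo t u ≠ ∞) (h0 : lam ≠ 0) (ht : lam ≠ ∞)
    {i : ℤ} {x : ℝ} (hx : x ∈ El u lam i) (f : ℝ → ℝ≥0∞) :
    opTinf w k f x ^ r ≤ ∑' n : ℕ, bl u w k lam f (i + n) ^ r := by
  have key : opTinf w k f x ≤ ⨆ n : ℕ, bl u w k lam f (i + n) := by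
    refine essSup_le_of_ae_le _ ?_
    have h : ∀ j, ∀ᵐ y ∂volume, y ∈ El u lam j →
        w y * intTo y (fun z => k y z * f z) ≤ bl u w k lam f j := by
      intro j
      rw [← ae_restrict_iff' (El_meas lam j)]
      exact ENNReal.ae_le_essSup _
    filter_upwards [ae_restrict_mem measurableSet_Ici, ae_restrict_of_ae (ae_all_iff.2 h)]
      with y hy hall
    have hy0 : 0 < y := hx.1.trans_le hy
    have hUy : intTo y u ≠ 0 := (bot_le.trans_lt (hx.2.1.trans_le (U_mono u hy))).ne'
    obtain ⟨j, h1, h2⟩ := exists_lv h0 ht hUy (hfin y hy0)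
    have hyE : y ∈ El u lam j := ⟨hy0, h1, h2⟩
    have hij := El_le hx hyE hy
    refine (hall j hyE).trans ?_
    have : bl u w k lam f j = bl u w k lam f (i + ((j - i).toNat : ℕ)) := by
      rw [Int.toNat_of_nonneg (by omega)]; congr 1; ring
    rw [this]
    exact le_iSup (fun n : ℕ => bl u w k lam f (i + n)) _
  rw [← ENNReal.rpow_le_rpow_iff (inv_pos.2 hr), ← ENNReal.rpow_mul, mul_inv_cancel₀ hr.ne',
    ENNReal.rpow_one]
  refine key.trans (iSup_le fun n => ?_)
  rw [← ENNReal.rpow_le_rpow_iff hr, ← ENNReal.rpow_mul, inv_mul_cancel₀ hr.ne',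
    ENNReal.rpow_one]
  exact ENNReal.le_tsum (f := fun n : ℕ => bl u w k lam f (i + n) ^ r) n

lemma T_le {r : ℝ} (hr : 0 < r) {u w : ℝ → ℝ≥0∞} (hu : Measurable u)
    (hfin : ∀ t : ℝ, 0 < t → intTo t u ≠ ∞) {k : ℝ → ℝ → ℝ≥0∞} {lam : ℝ≥0∞} (h0 : lam ≠ 0)
    (ht : lam ≠ ∞) (hl : ∀ j, lv lam j < Stot u → lv lam (j + 1) ≤ Stot u) (f : ℝ → ℝ≥0∞) :
    lpN r u (opTinf w k f) ^ r ≤ 4 * ∑' j, lv lam (j - 1) * bl u w k lam f j ^ r := by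
  rw [lpN_rpow hr]
  simp only [mul_comm _ (u _)]
  rw [lint_split hu hfin h0 ht]
  calc ∑' j, ∫⁻ x in El u lam j, u x * opTinf w k f x ^ r
      ≤ ∑' i : ℤ, ∑' n : ℕ, lv lam i * bl u w k lam f (i + n) ^ r := by
        refine ENNReal.tsum_le_tsum fun i => ?_
        rw [ENNReal.tsum_mul_left]
        calc _ ≤ ∫⁻ x in El u lam i, u x * ∑' n : ℕ, bl u w k lam f (i + n) ^ r := by
              refine setLIntegral_mono' (El_meas _ _) fun x hx => ?_
              gcongr
              exact opT_le_tsum hr hfin h0 ht hx f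
          _ ≤ _ := by
              rw [lintegral_mul_const _ hu]
              gcongr
              exact El_mass_le hu hfin ht hl i
    _ = ∑' n : ℕ, ∑' i : ℤ, lv lam i * bl u w k lam f (i + n) ^ r := ENNReal.tsum_comm
    _ = ∑' n : ℕ, ∑' j : ℤ, lv lam (j - n) * bl u w k lam f j ^ r := by
        refine tsum_congr fun n => ?_
        rw [← (Equiv.subRight (n:ℤ)).tsum_eq (fun i => lv lam i * bl u w k lam f (i + n) ^ r)]
        refine tsum_congr fun j => ?_
        simp
    _ = ∑' n : ℕ, 2⁻¹ ^ n * ∑' j : ℤ, lv lam j * bl u w k lam f j ^ r := by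
        refine tsum_congr fun n => ?_
        rw [← ENNReal.tsum_mul_left]
        refine tsum_congr fun j => ?_
        rw [lv_sub_nat]; ring
    _ = 2 * ∑' j : ℤ, lv lam j * bl u w k lam f j ^ r := by
        rw [ENNReal.tsum_mul_right, ENNReal.tsum_geometric, ENNReal.one_sub_inv_two, inv_inv]
    _ = _ := by
        rw [← ENNReal.tsum_mul_left, ← ENNReal.tsum_mul_left]
        refine tsum_congr fun j => ?_
        rw [← lv_sub_one]; ring

lemma bl_split {u w : ℝ → ℝ≥0∞} {k : ℝ → ℝ → ℝ≥0∞} {lam D : ℝ≥0∞} (hD : D ≠ ∞)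
    (hk : Oinarov k D) (hkm : Measurable (Function.uncurry k))
    {j : ℤ} {x : ℝ} (hx : x ∈ El u lam (j - 1)) {f : ℝ → ℝ≥0∞} (hf : Measurable f) :
    bl u w k lam f j ≤ PhiU u w k lam j f +
      D * (essSup (fun y => w y * k y x) (volume.restrict (Ici x)) * intTo x f) +
      D * (essSup w (volume.restrict (Ici x)) * intTo x (fun z => k x z * f z)) := by
  refine essSup_le_of_ae_le _ ?_
  have hV : ∀ᵐ y ∂volume, y ∈ Ici x →
      w y * k y x ≤ essSup (fun y => w y * k y x) (volume.restrict (Ici x)) := by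
    rw [← ae_restrict_iff' measurableSet_Ici]
    exact ENNReal.ae_le_essSup _
  have hW : ∀ᵐ y ∂volume, y ∈ Ici x → w y ≤ essSup w (volume.restrict (Ici x)) := by
    rw [← ae_restrict_iff' measurableSet_Ici]
    exact ENNReal.ae_le_essSup _
  have hP : ∀ᵐ y ∂(volume.restrict (El u lam j)),
    w y * ∫⁻ z in Ioo 0 y ∩ {z | lv lam (j - 1) < intTo z u}, k y z * f z ≤
      PhiU u w k lam j f := ENNReal.ae_le_essSup _
  filter_upwards [hP, ae_restrict_mem (El_meas lam j), ae_restrict_of_ae hV,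
    ae_restrict_of_ae hW] with y hP hy hV hW
  have h2 := hx.2.2
  rw [sub_add_cancel] at h2
  have hxy : x ≤ y := (U_lt (h2.trans_lt hy.2.1)).le
  have hPm : MeasurableSet {z | lv lam (j - 1) < intTo z u} :=
    measurableSet_lt measurable_const (U_mono u).measurable
  have hkx : Measurable fun z => k x z := hkm.of_uncurry_left
  have hsplit : intTo y (fun z => k y z * f z) ≤
      (∫⁻ z in Ioo 0 y ∩ {z | lv lam (j - 1) < intTo z u}, k y z * f z) +
        D * (k y x * intTo x f + intTo x (fun z => k x z * f z)) := by
    rw [intTo, ← lintegral_inter_add_sdiff _ (Ioo 0 y) hPm]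
    gcongr
    calc ∫⁻ z in Ioo 0 y \ {z | lv lam (j - 1) < intTo z u}, k y z * f z
        ≤ ∫⁻ z in Ioo 0 x, k y z * f z := by
          refine lintegral_mono_set ?_
          rintro z ⟨hz, hz'⟩
          exact ⟨hz.1, U_lt ((not_lt.1 hz').trans_lt hx.2.1)⟩
      _ ≤ ∫⁻ z in Ioo 0 x, D * (k y x * f z + k x z * f z) := by
          refine setLIntegral_mono' measurableSet_Ioo fun z hz => ?_
          rw [← add_mul, ← mul_assoc]
          gcongr
          exact (hk.2 y x z hz.1.le hz.2.le hxy).2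
      _ = _ := by
          rw [lintegral_const_mul' _ _ hD, lintegral_add_left (hf.const_mul _),
            lintegral_const_mul _ hf]
          rfl
  calc _ ≤ w y * ((∫⁻ z in Ioo 0 y ∩ {z | lv lam (j - 1) < intTo z u}, k y z * f z) +
        D * (k y x * intTo x f + intTo x (fun z => k x z * f z))) := by gcongr
    _ = w y * (∫⁻ z in Ioo 0 y ∩ {z | lv lam (j - 1) < intTo z u}, k y z * f z) +
        D * ((w y * k y x) * intTo x f) + D * (w y * intTo x (fun z => k x z * f z)) := by ring
    _ ≤ _ := by
        gcongr
        · exact hV hxy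
        · exact hW hxy

lemma add3_rpow {a b c : ℝ≥0∞} {r : ℝ} (hr : 0 < r) :
    (a + b + c) ^ r ≤ 3 ^ r * (a ^ r + b ^ r + c ^ r) := by
  have h1 : a + b + c ≤ 3 * max (max a b) c := by
    calc a + b + c ≤ max (max a b) c + max (max a b) c + max (max a b) c := by
          gcongr <;> simp
      _ = _ := by ring
  refine (ENNReal.rpow_le_rpow h1 hr.le).trans ?_
  rw [ENNReal.mul_rpow_of_nonneg _ _ hr.le]
  gcongr
  rcases max_choice (max a b) c with h | h
  · rw [h]
    rcases max_choice a b with h | h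
    · rw [h, add_assoc]; exact le_self_add
    · rw [h]; exact le_add_self.trans le_self_add
  · rw [h]; exact le_add_self

lemma meas_K {k : ℝ → ℝ → ℝ≥0∞} (hkm : Measurable (Function.uncurry k)) {f : ℝ → ℝ≥0∞}
    (hf : Measurable f) : Measurable fun x => intTo x (fun z => k x z * f z) := by
  have : (fun x => intTo x (fun z => k x z * f z)) =
      fun x => ∫⁻ z, ({q : ℝ × ℝ | 0 < q.2 ∧ q.2 < q.1}.indicator
        (fun q => Function.uncurry k q * f q.2)) (x, z) := by
    funext x
    rw [intTo, ← lintegral_indicator measurableSet_Ioo]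
    rfl
  rw [this]
  apply Measurable.lintegral_prod_right'
  refine (hkm.mul (hf.comp measurable_snd)).indicator ?_
  exact (measurableSet_lt measurable_const measurable_snd).inter
    (measurableSet_lt measurable_snd measurable_fst)

lemma meas_W (w : ℝ → ℝ≥0∞) : Measurable fun x : ℝ => essSup w (volume.restrict (Ici x)) :=
  Antitone.measurable fun _ _ h => essSup_set_mono (Ici_subset_Ici.2 h)

lemma CT_le {p r : ℝ} {D : ℝ≥0∞} (hp : 1 ≤ p) (hr : 0 < r) (hD : D ≠ ∞)
    {u v w : ℝ → ℝ≥0∞} {k : ℝ → ℝ → ℝ≥0∞} (hu : Measurable u)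
    (hkm : Measurable (Function.uncurry k))
    (hfin : ∀ t : ℝ, 0 < t → intTo t u ≠ ∞) (hk : Oinarov k D) (hS : Stot u ≠ 0)
    (hA : A0 p r u v w k + A1 p r u v w k + A2 p r u v w k ≠ ∞) :
    CT p r u v w k ≤ (4 * (3 ^ r * (2 ^ (r / p) + D ^ r + D ^ r))) ^ (1 / r) *
      (A0 p r u v w k + A1 p r u v w k + A2 p r u v w k) := by
  obtain ⟨lam, h0, ht, hl⟩ := exists_lam hS
  have hA01 := (ENNReal.add_ne_top.1 hA).1
  have hA2 := (ENNReal.add_ne_top.1 hA).2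
  have hA0 := (ENNReal.add_ne_top.1 hA01).1
  have hA1 := (ENNReal.add_ne_top.1 hA01).2
  set A := A0 p r u v w k + A1 p r u v w k + A2 p r u v w k with hAdef
  refine leastC_le fun f hf hΨ => ?_
  rw [← ENNReal.rpow_le_rpow_iff hr, mul_assoc, ENNReal.mul_rpow_of_nonneg _ _ hr.le,
    ← ENNReal.rpow_mul, one_div, inv_mul_cancel₀ hr.ne', ENNReal.rpow_one]
  refine (T_le hr hu hfin h0 ht hl f).trans ?_
  set V : ℝ → ℝ≥0∞ := fun x => essSup (fun y => w y * k y x) (volume.restrict (Ici x)) with hV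
  set W : ℝ → ℝ≥0∞ := fun x => essSup w (volume.restrict (Ici x)) with hW
  set G1 : ℝ → ℝ≥0∞ := fun x => u x * V x ^ r * intTo x f ^ r with hG1
  set G0 : ℝ → ℝ≥0∞ := fun x => u x * W x ^ r * intTo x (fun z => k x z * f z) ^ r with hG0
  have hG0m : Measurable G0 :=
    (hu.mul ((meas_W w).pow_const _)).mul ((meas_K hkm hf).pow_const _)
  have i0 : ∫⁻ x in Ioi (0:ℝ), G0 x ≤ (A * lpN p v f) ^ r := by
    have h : (∫⁻ x in Ioi (0:ℝ), G0 x) ^ (1/r) ≤ A0 p r u v w k * lpN p v f :=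
      le_leastC hA0 hf hΨ
    have h := ENNReal.rpow_le_rpow h hr.le
    rw [← ENNReal.rpow_mul, one_div, inv_mul_cancel₀ hr.ne', ENNReal.rpow_one] at h
    refine h.trans (ENNReal.rpow_le_rpow (mul_le_mul_left ?_ _) hr.le)
    exact le_self_add.trans le_self_add
  have i1 : ∫⁻ x in Ioi (0:ℝ), G1 x ≤ (A * lpN p v f) ^ r := by
    have h : (∫⁻ x in Ioi (0:ℝ), G1 x) ^ (1/r) ≤ A1 p r u v w k * lpN p v f :=
      le_leastC hA1 hf hΨ
    have h := ENNReal.rpow_le_rpow h hr.le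
    rw [← ENNReal.rpow_mul, one_div, inv_mul_cancel₀ hr.ne', ENNReal.rpow_one] at h
    refine h.trans (ENNReal.rpow_le_rpow (mul_le_mul_left ?_ _) hr.le)
    exact le_add_self.trans le_self_add
  have i2 : ∑' j, lv lam (j - 1) * PhiU u w k lam j f ^ r ≤
      2 ^ (r / p) * (A * lpN p v f) ^ r := by
    refine (sumB hp hr hu hfin h0 ht hl hA2 hf hΨ).trans ?_
    gcongr
    exact le_add_self
  have hDr : D ^ r ≠ ∞ := ENNReal.rpow_ne_top_of_nonneg hr.le hD
  have hterm : ∀ j, lv lam (j - 1) * bl u w k lam f j ^ r ≤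
      3 ^ r * (lv lam (j - 1) * PhiU u w k lam j f ^ r +
        D ^ r * (∫⁻ x in El u lam (j - 1), G1 x) + D ^ r * ∫⁻ x in El u lam (j - 1), G0 x) := by
    intro j
    by_cases hj : lv lam j < Stot u
    · have hm : ∫⁻ x in El u lam (j - 1), u x = lv lam (j - 1) :=
        El_mass hu hfin ht (by rw [sub_add_cancel]; exact hj.le)
      calc lv lam (j - 1) * bl u w k lam f j ^ r
          = ∫⁻ x in El u lam (j - 1), u x * bl u w k lam f j ^ r := by
            rw [lintegral_mul_const _ hu, hm]
        _ ≤ ∫⁻ x in El u lam (j - 1), 3 ^ r * (u x * PhiU u w k lam j f ^ r + D ^ r * G1 x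
              + D ^ r * G0 x) := by
            refine setLIntegral_mono' (El_meas _ _) fun x hx => ?_
            have hb := bl_split (w := w) hD hk hkm hx hf
            calc _ ≤ u x * (3 ^ r * (_ + _ + _)) :=
                  mul_le_mul_right ((ENNReal.rpow_le_rpow hb hr.le).trans (add3_rpow hr)) _
              _ = _ := by
                  simp only [ENNReal.mul_rpow_of_nonneg _ _ hr.le, hG1, hG0]
                  ring
        _ = _ := by
            rw [lintegral_const_mul' _ _ (ENNReal.rpow_ne_top_of_nonneg hr.le (by simp)),
              lintegral_add_right _ (hG0m.const_mul _), lintegral_add_left (hu.mul_const _),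
              lintegral_mul_const _ hu, hm, lintegral_const_mul' _ _ hDr,
              lintegral_const_mul' _ _ hDr]
    · have : El u lam j = ∅ := eq_empty_of_forall_notMem fun x hx => hj (El_lt_S hx)
      have hb : bl u w k lam f j = 0 := by
        rw [bl, this, Measure.restrict_empty, essSup_measure_zero]; rfl
      rw [hb, ENNReal.zero_rpow_of_pos hr, mul_zero]
      exact bot_le
  have hshift : ∀ G : ℝ → ℝ≥0∞, ∑' j : ℤ, ∫⁻ x in El u lam (j - 1), G x ≤
      ∫⁻ x in Ioi (0:ℝ), G x := fun G => by
    have e : ∑' j : ℤ, ∫⁻ x in El u lam (j - 1), G x = ∑' j, ∫⁻ x in El u lam j, G x :=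
      (Equiv.subRight (1:ℤ)).tsum_eq (fun j => ∫⁻ x in El u lam j, G x)
    rw [e]
    exact El_tsum_le G
  rw [mul_assoc]
  refine mul_le_mul_right ?_ _
  calc _ ≤ ∑' j, 3 ^ r * (lv lam (j - 1) * PhiU u w k lam j f ^ r +
        D ^ r * (∫⁻ x in El u lam (j - 1), G1 x) + D ^ r * ∫⁻ x in El u lam (j - 1), G0 x) :=
        ENNReal.tsum_le_tsum hterm
    _ = 3 ^ r * (∑' j, lv lam (j - 1) * PhiU u w k lam j f ^ r +
        D ^ r * (∑' j, ∫⁻ x in El u lam (j - 1), G1 x) +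
        D ^ r * ∑' j, ∫⁻ x in El u lam (j - 1), G0 x) := by
        rw [ENNReal.tsum_mul_left, ENNReal.tsum_add, ENNReal.tsum_add, ENNReal.tsum_mul_left,
          ENNReal.tsum_mul_left]
    _ ≤ 3 ^ r * (2 ^ (r / p) * (A * lpN p v f) ^ r + D ^ r * (A * lpN p v f) ^ r +
        D ^ r * (A * lpN p v f) ^ r) := by
        gcongr
        · exact (hshift _).trans i1
        · exact (hshift _).trans i0
    _ = _ := by ring

lemma zero_case {p r : ℝ} (hr : 0 < r) {u v w : ℝ → ℝ≥0∞} {k : ℝ → ℝ → ℝ≥0∞} (hu : Measurable u)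
    (hS : Stot u = 0) : CT p r u v w k = 0 ∧
      A2 p r u v w k = 0 := by
  have hz := hS
  rw [Stot, lintegral_eq_zero_iff hu] at hz
  have hU : ∀ t, intTo t u = 0 := fun t => le_antisymm (hS ▸ U_le_S u t) bot_le
  constructor
  · refine le_antisymm (leastC_le fun f _ _ => ?_) bot_le
    have : lpN r u (opTinf w k f) = 0 := by
      rw [lpN, lintegral_congr_ae (g := fun _ => 0)]
      · simp [hr]
      · filter_upwards [hz] with x hx
        rw [hx]; simp
    rw [this]; exact bot_le
  · rw [A2]
    split_ifs with hpr
    · simp [hU, hr]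
    · have hs' : 0 < 1 / r - 1 / p := 
        sub_pos.2 (one_div_lt_one_div_of_lt hr (not_le.1 hpr))
      rw [lintegral_congr_ae (g := fun _ => 0)]
      · rw [lintegral_zero, ENNReal.zero_rpow_of_pos hs']
      · filter_upwards [hz] with x hx
        rw [hx]; simp

theorem statement1 (p r : ℝ) (D : ℝ≥0∞)
    (hp : 1 ≤ p) (hr : 0 < r) (hD1 : 1 ≤ D) (hD : D ≠ ∞) :
    ∃ c₁ c₂ : ℝ≥0∞, 0 < c₁ ∧ c₁ ≠ ∞ ∧ 0 < c₂ ∧ c₂ ≠ ∞ ∧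
      ∀ (u v w : ℝ → ℝ≥0∞) (k : ℝ → ℝ → ℝ≥0∞),
        Measurable u → Measurable v → Measurable w →
        Measurable (Function.uncurry k) →
        (∀ t : ℝ, 0 < t → intTo t u ≠ ∞) →
        Oinarov k D →
        (CT p r u v w k < ∞ ↔
            A0 p r u v w k + A1 p r u v w k + A2 p r u v w k < ∞) ∧
        CT p r u v w k ≤
            c₁ * (A0 p r u v w k + A1 p r u v w k + A2 p r u v w k) ∧
        A0 p r u v w k + A1 p r u v w k + A2 p r u v w k ≤
            c₂ * CT p r u v w k := by
  have hp0 : 0 < p := by linarith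
  set K1 : ℝ≥0∞ := (4 * (3 ^ r * (2 ^ (r / p) + D ^ r + D ^ r))) ^ (1 / r) with hK1
  set K2 : ℝ≥0∞ := 2 ^ (1 / p) * ((4 * 2 ^ r) ^ (1 / r)) with hK2
  have hDr : D ^ r ≠ ∞ := ENNReal.rpow_ne_top_of_nonneg hr.le hD
  have h2r : (2:ℝ≥0∞) ^ r ≠ ∞ := ENNReal.rpow_ne_top_of_nonneg hr.le (by simp)
  have h3r : (3:ℝ≥0∞) ^ r ≠ ∞ := ENNReal.rpow_ne_top_of_nonneg hr.le (by simp)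
  have h2rp : (2:ℝ≥0∞) ^ (r / p) ≠ ∞ := ENNReal.rpow_ne_top_of_nonneg (by positivity) (by simp)
  have hK1t : K1 ≠ ∞ := ENNReal.rpow_ne_top_of_nonneg (by positivity)
    (ENNReal.mul_ne_top (by simp) (ENNReal.mul_ne_top h3r
      (ENNReal.add_ne_top.2 ⟨ENNReal.add_ne_top.2 ⟨h2rp, hDr⟩, hDr⟩)))
  have hK2t : K2 ≠ ∞ := ENNReal.mul_ne_top
    (ENNReal.rpow_ne_top_of_nonneg (by positivity) (by simp))
    (ENNReal.rpow_ne_top_of_nonneg (by positivity) (ENNReal.mul_ne_top (by simp) h2r))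
  have hc1 : K1 + 1 ≠ ∞ := ENNReal.add_ne_top.2 ⟨hK1t, by simp⟩
  have hc2 : D + D + (K2 + 1) ≠ ∞ :=
    ENNReal.add_ne_top.2 ⟨ENNReal.add_ne_top.2 ⟨hD, hD⟩, ENNReal.add_ne_top.2 ⟨hK2t, by simp⟩⟩
  have hc1p : 0 < K1 + 1 := zero_lt_one.trans_le le_add_self
  have hc2p : 0 < D + D + (K2 + 1) := zero_lt_one.trans_le (le_add_self.trans le_add_self)
  refine ⟨K1 + 1, D + D + (K2 + 1), hc1p, hc1, hc2p, hc2, ?_⟩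
  intro u v w k hu hv _ hkm hfin hk
  have hup : CT p r u v w k ≤
      (K1 + 1) * (A0 p r u v w k + A1 p r u v w k + A2 p r u v w k) := by
    by_cases hA : A0 p r u v w k + A1 p r u v w k + A2 p r u v w k = ∞
    · rw [hA, ENNReal.mul_top hc1p.ne']; exact le_top
    by_cases hS : Stot u = 0
    · rw [(zero_case hr hu hS).1]; exact bot_le
    · refine (CT_le hp hr hD hu hkm hfin hk hS hA).trans ?_
      gcongr
      exact le_self_add
  have hlo : A0 p r u v w k + A1 p r u v w k + A2 p r u v w k ≤
      (D + D + (K2 + 1)) * CT p r u v w k := by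
    by_cases hC : CT p r u v w k = ∞
    · rw [hC, ENNReal.mul_top hc2p.ne']; exact le_top
    rw [add_mul, add_mul]
    refine add_le_add (add_le_add (A0_le hr hD1 hD hk hC) (A1_le hr hD1 hD hk hC)) ?_
    by_cases hS : Stot u = 0
    · rw [(zero_case hr hu hS).2]; exact bot_le
    rcases le_or_gt p r with hpr | hrp
    · refine (A2_le_of_le hr hpr hfin hC hu).trans ?_
      rw [add_mul, one_mul]; exact le_add_self
    · refine (A2_le_of_lt hr hrp hu hv hS hfin hC).trans ?_
      gcongr
      exact le_self_add
  refine ⟨⟨fun h => ?_, fun h => ?_⟩, hup, hlo⟩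
  · exact lt_of_le_of_lt hlo (ENNReal.mul_lt_top hc2.lt_top h)
  · exact lt_of_le_of_lt hup (ENNReal.mul_lt_top hc1.lt_top h)


end
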